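/- Let d ≥ 3 and ε ∈ (0,1), with B = B(0,N^{1−ε/2}) ⊂ T. There exist constants c, c′ > 0 depending only on d and ε such that for every nonempty V ⊆ B and all N ≥ 2: 1/E[H_V] ≤ (1 + c N^{−c′}) · cap(𝖵)/N^d, where 𝖵 = φ(V). -/

import Mathlib

open MeasureTheory Filter Classical
open scoped ENNReal NNReal

noncomputable section

namespace Frag

/-! ### Graph-theoretic basics -/

/-- Two vertices of `Fin d → R` are adjacent if they differ in exactly one
coordinate, by `±1` (Euclidean distance one). -/
def adj {d : ℕ} {R : Type*} [AddGroupWithOne R] (x y : Fin d → R) : Prop :=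
  x ≠ y ∧ ∃ i : Fin d, (y i = x i + 1 ∨ x i = y i + 1) ∧ ∀ j : Fin d, j ≠ i → x j = y j

/-- The discrete torus `(ℤ/Nℤ)^d`. -/
abbrev Torus (d N : ℕ) := Fin d → ZMod N

/-- The lattice `ℤ^d`. -/
abbrev Lat (d : ℕ) := Fin d → ℤ

instance (n : ℕ) : MeasurableSpace (ZMod n) := ⊤

/-- The `ℓ∞`-distance on the torus. -/
def torusDist {d N : ℕ} (x y : Torus d N) : ℕ :=
  Finset.univ.sup fun i : Fin d => min (x i - y i).val (y i - x i).val

/-- The `ℓ∞`-distance on the lattice. -/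
def latDist {d : ℕ} (x y : Lat d) : ℕ :=
  Finset.univ.sup fun i : Fin d => (x i - y i).natAbs

/-- Closed `ℓ∞`-ball in the torus. -/
def torusBall {d N : ℕ} (x : Torus d N) (r : ℝ) : Set (Torus d N) :=
  {y | (torusDist x y : ℝ) ≤ r}

/-- Closed `ℓ∞`-ball in the lattice. -/
def latBall {d : ℕ} (x : Lat d) (r : ℝ) : Set (Lat d) :=
  {y | (latDist x y : ℝ) ≤ r}

/-- `x` and `y` are connected by a nearest-neighbour path staying in `S`. -/
def connectedIn {α : Type*} (rel : α → α → Prop) (S : Set α) (x y : α) : Prop :=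
  ∃ (n : ℕ) (p : ℕ → α), p 0 = x ∧ p n = y ∧ (∀ k, k ≤ n → p k ∈ S) ∧
    ∀ k, k < n → rel (p k) (p (k + 1))

/-- The connected component of `x` inside `S`. -/
def compOf {α : Type*} (rel : α → α → Prop) (S : Set α) (x : α) : Set α :=
  {y | connectedIn rel S x y}

/-- `S` is a connected set. -/
def IsConnSet {α : Type*} (rel : α → α → Prop) (S : Set α) : Prop :=
  ∀ x ∈ S, ∀ y ∈ S, connectedIn rel S x y

/-- External vertex boundary. -/
def extBdry {α : Type*} (rel : α → α → Prop) (S : Set α) : Set α :=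
  {y | y ∉ S ∧ ∃ x ∈ S, rel x y}

/-- Internal vertex boundary. -/
def intBdry {α : Type*} (rel : α → α → Prop) (S : Set α) : Set α :=
  {x | x ∈ S ∧ ∃ y, y ∉ S ∧ rel x y}

/-- The cardinality of the largest connected component of `S`. -/
def maxCompSize {α : Type*} (rel : α → α → Prop) (S : Set α) : ℕ :=
  sSup {n | ∃ x ∈ S, n = (compOf rel S x).ncard}

/-- The diameter of a set with respect to a distance. -/
def diamOf {α : Type*} (dist : α → α → ℕ) (S : Set α) : ℕ :=
  sSup {n | ∃ x ∈ S, ∃ y ∈ S, n = dist x y}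

/-- The canonical graph isomorphism `φ` from `B(0, N/4) ⊆ (ℤ/Nℤ)^d` onto
`B(0, N/4) ⊆ ℤ^d`, given by the signed representative of each coordinate. -/
def torusToLat {d N : ℕ} (x : Torus d N) : Lat d :=
  fun i => if ((x i).val : ℝ) ≤ (N : ℝ) / 2 then ((x i).val : ℤ) else ((x i).val : ℤ) - (N : ℤ)

/-! ### Discrete-time simple random walk -/

/-- One-step transition probability of the simple random walk. -/
def srwStep {d : ℕ} {R : Type*} [AddGroupWithOne R] (x y : Fin d → R) : ℝ≥0∞ :=
  if adj x y then ((2 * d : ℕ) : ℝ≥0∞)⁻¹ else 0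

/-- `μ` is the law on path space of the discrete-time simple random walk with
initial distribution `init`, characterized by its cylinder probabilities. -/
def IsWalkLaw {d : ℕ} {R : Type*} [AddGroupWithOne R] [MeasurableSpace R]
    (μ : Measure (ℕ → (Fin d → R))) (init : (Fin d → R) → ℝ≥0∞) : Prop :=
  IsProbabilityMeasure μ ∧
  ∀ (n : ℕ) (w : ℕ → (Fin d → R)),
    μ {ω | ∀ k, k ≤ n → ω k = w k} =
      init (w 0) * ∏ k ∈ Finset.range n, srwStep (w k) (w (k + 1))

/-- The uniform initial distribution on the torus. -/
def unifInit (d N : ℕ) : Torus d N → ℝ≥0∞ := fun _ => ((N : ℝ≥0∞) ^ d)⁻¹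

/-- The initial distribution concentrated at `x`. -/
def pointInit {α : Type*} (x : α) : α → ℝ≥0∞ := fun y => if y = x then 1 else 0

/-- The set of sites visited in the first `t` steps. -/
def visited {α : Type*} (t : ℕ) (ω : ℕ → α) : Set α := {v | ∃ k, k ≤ t ∧ ω k = v}

/-! ### Capacity and random interlacements on `ℤ^d` -/

/-- The event that the walk never returns to `V` after time `0`. -/
def escEvent {d : ℕ} (V : Set (Lat d)) : Set (ℕ → Lat d) :=
  {w | ∀ n, 1 ≤ n → w n ∉ V}

/-- `r` is the (simple random walk) capacity of `V ⊆ ℤ^d`: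
`r = Σ_{x ∈ V} P_x[H̃_V = ∞]`. -/
def IsCap (d : ℕ) (V : Set (Lat d)) (r : ℝ) : Prop :=
  ∃ μ : Lat d → Measure (ℕ → Lat d),
    (∀ x, IsWalkLaw (μ x) (pointInit x)) ∧
    r = ∑ᶠ x ∈ V, ((μ x) (escEvent V)).toReal

/-- `I` is a random interlacement at level `u` on the probability space `(Ω, P)`:
for every finite `V ⊆ ℤ^d`, `P[I ∩ V = ∅] = exp (−u · cap V)`. -/
def IsInterlacement (d : ℕ) (u : ℝ) {Ω : Type*} [MeasurableSpace Ω]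
    (P : Measure Ω) (I : Ω → Set (Lat d)) : Prop :=
  IsProbabilityMeasure P ∧
  (∀ x : Lat d, MeasurableSet {ω | x ∈ I ω}) ∧
  ∀ V : Set (Lat d), V.Finite → ∀ r : ℝ, IsCap d V r →
    P {ω | ∀ x ∈ V, x ∉ I ω} = ENNReal.ofReal (Real.exp (-u * r))

/-- `e = η(u)`, the probability that the origin lies in an infinite component of
the vacant set `V^u = ℤ^d ∖ I^u` of a random interlacement at level `u`. -/
def IsEta (d : ℕ) (u e : ℝ) : Prop :=
  ∃ (Ω : Type) (_ : MeasurableSpace Ω) (P : Measure Ω) (I : Ω → Set (Lat d)),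
    IsInterlacement d u P I ∧
    e = (P {ω | (compOf adj ((I ω)ᶜ) (0 : Lat d)).Infinite}).toReal

/-- The critical level `u_* = inf {u ≥ 0 : η(u) = 0}`. -/
def uStar (d : ℕ) : ℝ := sInf {u | 0 ≤ u ∧ IsEta d u 0}

/-- The probability of an event `E` about a random interlacement at level `u`. -/
def intProb (d : ℕ) (u : ℝ) (E : Set (Lat d) → Prop) : ℝ :=
  sSup {p | ∃ (Ω : Type) (_ : MeasurableSpace Ω) (P : Measure Ω) (I : Ω → Set (Lat d)),
    IsInterlacement d u P I ∧ p = (P {ω | E (I ω)}).toReal}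

/-- The event that `B(0,L)` is connected to the external boundary of `B(0,2L)`
by a nearest-neighbour path in `S`. -/
def connAcross (d L : ℕ) (S : Set (Lat d)) : Prop :=
  ∃ x ∈ latBall (0 : Lat d) (L : ℝ), ∃ y ∈ extBdry adj (latBall (0 : Lat d) (2 * (L : ℝ))),
    connectedIn adj S x y

/-- The critical level `u_** = inf {u ≥ 0 : α(u) > 0}`. -/
def uStarStar (d : ℕ) : ℝ :=
  sInf {u | 0 ≤ u ∧ ∃ a : ℝ, 0 < a ∧
    Tendsto (fun L : ℕ => (L : ℝ) ^ a * intProb d u fun I => connAcross d L Iᶜ)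
      atTop (nhds 0)}

/-- `u` is a strongly supercritical level for random interlacements on `ℤ^d`. -/
def StronglySupercritical (d : ℕ) (u : ℝ) : Prop :=
  ∃ μ : ℝ, 0 < μ ∧
  ∃ (Ω : Type) (_ : MeasurableSpace Ω) (P : Measure Ω) (I : ℝ → Ω → Set (Lat d)),
    (∀ v : ℝ, 0 ≤ v → IsInterlacement d v P (I v)) ∧
    (∀ v v' : ℝ, v ≤ v' → ∀ ω, I v ω ⊆ I v' ω) ∧
    ∃ N₀ : ℕ, ∀ N : ℕ, N₀ ≤ N →
      (1 - Real.exp (-(N : ℝ) ^ μ) ≤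
        (P {ω | ∃ x ∈ latBall (0 : Lat d) (N : ℝ),
          (compOf adj ((I (u * (1 + μ)) ω)ᶜ) x).Infinite}).toReal) ∧
      (1 - Real.exp (-(N : ℝ) ^ μ) ≤
        (P {ω | ∀ S₁ S₂ : Set (Lat d),
            S₁ ⊆ (I (u * (1 - μ)) ω)ᶜ ∩ latBall 0 (N : ℝ) →
            S₂ ⊆ (I (u * (1 - μ)) ω)ᶜ ∩ latBall 0 (N : ℝ) →
            IsConnSet adj S₁ → IsConnSet adj S₂ →
            (N : ℝ) / 8 ≤ (diamOf latDist S₁ : ℝ) →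
            (N : ℝ) / 8 ≤ (diamOf latDist S₂ : ℝ) →
            ∃ x ∈ S₁, ∃ y ∈ S₂,
              connectedIn adj ((I (u * (1 + μ)) ω)ᶜ ∩ latBall 0 (2 * (N : ℝ))) x y}).toReal)

/-! ### Continuous-time walk -/

/-- Sample space for the continuous-time walk: a discrete path together with
the i.i.d. exponential interarrival gaps of the driving Poisson process. -/
abbrev CTPath (d N : ℕ) := (ℕ → Torus d N) × (ℕ → ℝ)

/-- The number of jumps performed up to time `t`. -/
def nJumps (g : ℕ → ℝ) (t : ℝ) : ℕ := sSup {n | ∑ k ∈ Finset.range n, g k ≤ t}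

/-- The position of the continuous-time walk at time `t`. -/
def ctPos {d N : ℕ} (ω : CTPath d N) (t : ℝ) : Torus d N := ω.1 (nJumps ω.2 t)

/-- `ν` is the law of an i.i.d. sequence of exponential random variables of
parameter `1`, characterized by its joint survival function. -/
def IsIIDExp (ν : Measure (ℕ → ℝ)) : Prop :=
  IsProbabilityMeasure ν ∧
  ∀ (n : ℕ) (s : ℕ → ℝ), (∀ k, 0 ≤ s k) →
    ν {g | ∀ k, k ≤ n → s k < g k} =
      ENNReal.ofReal (Real.exp (-(∑ k ∈ Finset.range (n + 1), s k)))

/-- `P` is the law of the continuous-time simple random walk `Y_t = X_{N_t}`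
with initial distribution `init`. -/
def IsCTWalk {d N : ℕ} (P : Measure (CTPath d N)) (init : Torus d N → ℝ≥0∞) : Prop :=
  ∃ (μ : Measure (ℕ → Torus d N)) (ν : Measure (ℕ → ℝ)),
    IsWalkLaw μ init ∧ IsIIDExp ν ∧ P = μ.prod ν

/-- The entrance time `H_V = inf {t ≥ 0 : Y_t ∈ V}`. -/
def hitT {d N : ℕ} (V : Set (Torus d N)) (ω : CTPath d N) : ℝ :=
  sInf {t | 0 ≤ t ∧ ctPos ω t ∈ V}

/-- The entrance time to `V` after time `s`. -/
def hitTAfter {d N : ℕ} (V : Set (Torus d N)) (ω : CTPath d N) (s : ℝ) : ℝ :=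
  sInf {t | s ≤ t ∧ ctPos ω t ∈ V}

/-- The exit time `T_V = inf {t ≥ 0 : Y_t ∉ V}`. -/
def exitT {d N : ℕ} (V : Set (Torus d N)) (ω : CTPath d N) : ℝ :=
  sInf {t | 0 ≤ t ∧ ctPos ω t ∉ V}

/-- The regeneration time `t_* = (N log N)^2`. -/
def tstar (N : ℕ) : ℝ := ((N : ℝ) * Real.log N) ^ 2

/-- The first time `t ≥ s + t_*` such that the walk has avoided `B` during the
whole interval `[t − t_*, t]`. -/
def uEndAfter {d N : ℕ} (B : Set (Torus d N)) (ω : CTPath d N) (s : ℝ) : ℝ :=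
  sInf {t | s + tstar N ≤ t ∧ ∀ r, t - tstar N ≤ r → r ≤ t → ctPos ω r ∉ B}

/-- The successive excursion times `(R_k, U_k)` between `A` and (long absences
from) `B`, with the convention `(R_0, U_0) = (0, 0)`. -/
def excTimes {d N : ℕ} (A B : Set (Torus d N)) (ω : CTPath d N) : ℕ → ℝ × ℝ
  | 0 => (0, 0)
  | k + 1 =>
      let R := hitTAfter A ω (excTimes A B ω k).2
      (R, uEndAfter B ω R)

/-- The range of the continuous-time walk during the time interval `[a, b]`. -/
def ctRange {d N : ℕ} (ω : CTPath d N) (a b : ℝ) : Set (Torus d N) :=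
  {v | ∃ t, a ≤ t ∧ t ≤ b ∧ ctPos ω t = v}

/-! ### The killed walk and the quasistationary distribution -/

/-- The action of the substochastic matrix `P^B` (walk killed on `B`) on a
vector `v`. -/
def killedMul (d N : ℕ) (B : Set (Torus d N)) (v : Torus d N → ℝ) (x : Torus d N) : ℝ :=
  ∑ᶠ y : Torus d N, if y ∉ B ∧ adj x y then v y / (2 * d) else 0

/-- `l` is an eigenvalue of the killed transition matrix `P^B`. -/
def IsKilledEigenvalue (d N : ℕ) (B : Set (Torus d N)) (l : ℝ) : Prop :=
  ∃ v : Torus d N → ℝ, v ≠ 0 ∧ (∀ x ∈ B, v x = 0) ∧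
    ∀ x, x ∉ B → killedMul d N B v x = l * v x

/-- `σ` is the quasistationary distribution on `T ∖ B`: the normalized
non-negative principal (Perron–Frobenius) eigenvector of `P^B`. -/
def IsQSD (d N : ℕ) (B : Set (Torus d N)) (σ : Torus d N → ℝ) : Prop :=
  (∀ x, 0 ≤ σ x) ∧ (∀ x ∈ B, σ x = 0) ∧ (∑ᶠ x, σ x = 1) ∧
  ∃ l : ℝ, (∀ x, x ∉ B → killedMul d N B σ x = l * σ x) ∧
    ∀ l', IsKilledEigenvalue d N B l' → l' ≤ l

/-- The Dirichlet form of the simple random walk on the torus. -/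
def dirichlet (d N : ℕ) (g : Torus d N → ℝ) : ℝ :=
  (1 / 2) * ∑ᶠ x : Torus d N, ∑ᶠ y : Torus d N,
    if adj x y then (g x - g y) ^ 2 / (2 * d * (N : ℝ) ^ d) else 0

end Frag

/-!
The Green function `∑ k < n, survivalProb V k` of the walk killed on `V` has Laplacian close to `1`
off `V` and total mass at most `N ^ d * E[H_V]`. Pairing it, by Cauchy–Schwarz for the Dirichlet
form, with any `h` vanishing on `V` bounds `(∑ h) ^ 2` by `E[H_V]` times the energy of `h`.

The test function is the probability on `ℤ ^ d` of never hitting `φ(V)`, truncated at a height `c`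
slightly below `1`: on the lattice the energy of this truncation is at most `c` times the capacity.
It can be transported to the torus because it is constant away from a small box. Indeed, shrink `ε`
so that `ε ≤ 1`, and let `z = N ^ (-ε / 8)`, so that `V` has radius `N z ^ 4`. As the hitting
probability is dominated by a multiple of the superharmonic function `(|x| ^ 2 + 100) ^ (-1 / 4)`,
the truncation at `c = 1 - O(z)` takes effect outside a box of radius `N z ^ 2`, whose relative
volume is `O(z)` as well.

When `z` is not small, `N` is bounded, and only finitely many sets `φ(V)` occur; their capacities
are bounded below because the walk is transient.
-/

namespace Frag

section SurvivalProbability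

variable {α : Type*} (G : SimpleGraph α) [G.LocallyFinite]

/-- The transition operator of simple random walk on `G`: the average of `v` over the neighbours
of `x`, with the junk value `0` at isolated vertices. -/
def neighborMean : (α → ℝ) →ₗ[ℝ] α → ℝ where
  toFun v x := (G.degree x : ℝ)⁻¹ * ∑ y ∈ G.neighborFinset x, v y
  map_add' v w := by ext x; simp [Finset.sum_add_distrib, mul_add]
  map_smul' a v := by ext x; simp [← Finset.mul_sum, mul_left_comm]

lemma neighborMean_apply (v : α → ℝ) (x : α) :
    neighborMean G v x = (G.degree x : ℝ)⁻¹ * ∑ y ∈ G.neighborFinset x, v y := rfl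

lemma neighborMean_mono : Monotone (neighborMean G) := fun _ _ h x =>
  mul_le_mul_of_nonneg_left (Finset.sum_le_sum fun y _ => h y) (by positivity)

lemma neighborMean_nonneg {v : α → ℝ} (hv : 0 ≤ v) : 0 ≤ neighborMean G v := by
  simpa using neighborMean_mono G hv

lemma neighborMean_one_le : neighborMean G 1 ≤ 1 := fun x => by
  simpa [neighborMean_apply] using inv_mul_le_one (a := (G.degree x : ℝ))

variable {G} in
lemma neighborMean_one_apply {x : α} (hx : G.degree x ≠ 0) : neighborMean G 1 x = 1 := by
  simpa [neighborMean_apply] using inv_mul_cancel₀ (Nat.cast_ne_zero.mpr hx)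

lemma degree_mul_neighborMean (v : α → ℝ) (x : α) :
    G.degree x * neighborMean G v x = ∑ y ∈ G.neighborFinset x, v y := by
  rcases eq_or_ne (G.degree x) 0 with hx | hx
  · simp [hx, Finset.card_eq_zero.mp ((G.card_neighborFinset_eq_degree x).trans hx)]
  · rw [neighborMean_apply, mul_inv_cancel_left₀ (Nat.cast_ne_zero.mpr hx)]

lemma tendsto_neighborMean {ι : Type*} {l : Filter ι} {v : ι → α → ℝ} {u : α → ℝ}
    (h : Tendsto v l (nhds u)) :
    Tendsto (fun i => neighborMean G (v i)) l (nhds (neighborMean G u)) :=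
  tendsto_pi_nhds.mpr fun _ =>
    (tendsto_finsetSum _ fun y _ => tendsto_pi_nhds.mp h y).const_mul _

/-- The probability that simple random walk on `G` started at `x` avoids `V` at the times
`0, …, n`, by recursion on the first step. -/
def survivalProb (V : Set α) : ℕ → α → ℝ
  | 0, x => if x ∈ V then 0 else 1
  | n + 1, x => if x ∈ V then 0 else neighborMean G (survivalProb V n) x

variable {G} {V : Set α} {x : α}

lemma survivalProb_of_mem (hx : x ∈ V) (n : ℕ) : survivalProb G V n x = 0 := by
  cases n <;> simp [survivalProb, hx]

lemma survivalProb_zero_of_notMem (hx : x ∉ V) : survivalProb G V 0 x = 1 := if_neg hx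

lemma survivalProb_succ_of_notMem (hx : x ∉ V) (n : ℕ) :
    survivalProb G V (n + 1) x = neighborMean G (survivalProb G V n) x := if_neg hx

variable (G V)

lemma survivalProb_nonneg (n : ℕ) : 0 ≤ survivalProb G V n := by
  induction n with
  | zero => exact fun x => by simp only [survivalProb]; split_ifs <;> simp
  | succ n ih =>
    intro x
    by_cases hx : x ∈ V
    · exact (survivalProb_of_mem hx _).ge
    · exact (neighborMean_nonneg G ih x).trans_eq (survivalProb_succ_of_notMem hx n).symm

lemma survivalProb_antitone : Antitone (survivalProb G V) := by
  refine antitone_nat_of_succ_le fun n => ?_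
  induction n with
  | zero =>
    intro x
    by_cases hx : x ∈ V
    · simp only [survivalProb_of_mem hx, le_refl]
    · rw [survivalProb_succ_of_notMem hx, survivalProb_zero_of_notMem hx]
      refine (neighborMean_mono G (fun y => ?_) x).trans (neighborMean_one_le G x)
      simp only [survivalProb, Pi.one_apply]
      split_ifs <;> simp
  | succ n ih =>
    intro x
    by_cases hx : x ∈ V
    · simp only [survivalProb_of_mem hx, le_refl]
    · simpa only [survivalProb_succ_of_notMem hx] using neighborMean_mono G ih x

/-- The probability that simple random walk on `G` started at `x` never visits `V`. -/
def neverHitProb (x : α) : ℝ := ⨅ n, survivalProb G V n x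

lemma tendsto_survivalProb :
    Tendsto (survivalProb G V) atTop (nhds (neverHitProb G V)) :=
  tendsto_pi_nhds.mpr fun x => tendsto_atTop_ciInf (fun _ _ h => survivalProb_antitone G V h x)
    ⟨0, Set.forall_mem_range.mpr fun n => survivalProb_nonneg G V n x⟩

lemma neverHitProb_nonneg : 0 ≤ neverHitProb G V := fun x =>
  le_ciInf fun n => survivalProb_nonneg G V n x

variable {G V}

lemma neverHitProb_of_mem (hx : x ∈ V) : neverHitProb G V x = 0 := by
  simp [neverHitProb, survivalProb_of_mem hx]

lemma neighborMean_neverHitProb (hx : x ∉ V) :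
    neighborMean G (neverHitProb G V) x = neverHitProb G V x := by
  have hmean := tendsto_pi_nhds.mp (tendsto_neighborMean G (tendsto_survivalProb G V)) x
  have hshift := (tendsto_pi_nhds.mp (tendsto_survivalProb G V) x).comp (tendsto_add_atTop_nat 1)
  refine tendsto_nhds_unique hmean (hshift.congr fun n => ?_)
  exact survivalProb_succ_of_notMem hx n

lemma one_sub_neverHitProb_le_of_superharmonic (hG : ∀ x, G.degree x ≠ 0) {u : α → ℝ}
    (hu : 0 ≤ u) (hV : ∀ x ∈ V, 1 ≤ u x) (hsuper : neighborMean G u ≤ u) :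
    1 - neverHitProb G V ≤ u := by
  have hle (n : ℕ) : 1 - survivalProb G V n ≤ u := by
    induction n with
    | zero =>
      intro x
      by_cases hx : x ∈ V
      · simpa [survivalProb_of_mem hx] using hV x hx
      · simpa [survivalProb_zero_of_notMem hx] using hu x
    | succ n ih =>
      intro x
      by_cases hx : x ∈ V
      · simpa [survivalProb_of_mem hx] using hV x hx
      · calc 1 - survivalProb G V (n + 1) x
            = neighborMean G (1 - survivalProb G V n) x := by
              rw [survivalProb_succ_of_notMem hx, map_sub, Pi.sub_apply,
                neighborMean_one_apply (hG x)]
          _ ≤ neighborMean G u x := neighborMean_mono G ih x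
          _ ≤ u x := hsuper x
  exact le_of_tendsto' ((tendsto_survivalProb G V).const_sub 1) hle

end SurvivalProbability

section DirichletForm

variable {α : Type*} [Fintype α] (G : SimpleGraph α)

/-- The Dirichlet form of `G`, in the normalization `∑ (f x - f y) * (g x - g y)` over the edges
`{x, y}` of `G`. -/
def dirichletForm : LinearMap.BilinForm ℝ (α → ℝ) := Matrix.toLinearMap₂' ℝ (G.lapMatrix ℝ)

lemma dirichletForm_comm (f g : α → ℝ) : dirichletForm G f g = dirichletForm G g f := by
  simp only [dirichletForm, Matrix.toLinearMap₂'_apply']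
  rw [Matrix.dotProduct_mulVec, ← Matrix.mulVec_transpose, (G.isSymm_lapMatrix ℝ).eq,
    dotProduct_comm]

lemma dirichletForm_self_nonneg (f : α → ℝ) : 0 ≤ dirichletForm G f f := by
  simpa [dirichletForm, Matrix.toLinearMap₂'_apply'] using
    (G.posSemidef_lapMatrix ℝ).dotProduct_mulVec_nonneg f

lemma dirichletForm_sq_le (f g : α → ℝ) :
    dirichletForm G f g ^ 2 ≤ dirichletForm G f f * dirichletForm G g g :=
  LinearMap.BilinForm.apply_sq_le_of_symm _ (dirichletForm_self_nonneg G)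
    ⟨dirichletForm_comm G⟩ f g

lemma dirichletForm_const_left (c : ℝ) (f : α → ℝ) : dirichletForm G (fun _ => c) f = 0 := by
  rw [dirichletForm_comm, show (fun _ : α => c) = c • fun _ => 1 by ext; simp, map_smul,
    dirichletForm, Matrix.toLinearMap₂'_apply', G.lapMatrix_mulVec_const_eq_zero]
  simp

lemma dirichletForm_apply (f g : α → ℝ) :
    dirichletForm G f g = ∑ x, f x * (G.degree x * (g x - neighborMean G g x)) := by
  simp only [dirichletForm, Matrix.toLinearMap₂'_apply', dotProduct, G.lapMatrix_mulVec_apply,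
    mul_sub, degree_mul_neighborMean]

variable {G}

lemma neverHitProb_eq_zero (hG : G.Preconnected) {V : Set α} (hV : V.Nonempty) :
    neverHitProb G V = 0 := by
  have henergy : dirichletForm G (neverHitProb G V) (neverHitProb G V) = 0 := by
    rw [dirichletForm_apply]
    refine Finset.sum_eq_zero fun x _ => ?_
    by_cases hx : x ∈ V
    · simp [neverHitProb_of_mem hx]
    · simp [neighborMean_neverHitProb hx]
  obtain ⟨z, hz⟩ := hV
  ext x
  rw [((G.lapMatrix_toLinearMap₂'_apply'_eq_zero_iff_forall_reachable _).mp henergy) x z (hG x z),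
    neverHitProb_of_mem hz, Pi.zero_apply]

/-- The truncated Green function `∑ k < n, survivalProb k`, whose Laplacian off `V` is
`degree * (1 - survivalProb n)`. -/
def truncatedGreen (G : SimpleGraph α) (V : Set α) (n : ℕ) : α → ℝ :=
  ∑ k ∈ Finset.range n, survivalProb G V k

lemma dirichletForm_truncatedGreen {V : Set α} {h : α → ℝ} (hV : ∀ x ∈ V, h x = 0) (n : ℕ) :
    dirichletForm G h (truncatedGreen G V n) =
      ∑ x, G.degree x * h x * (1 - survivalProb G V n x) := by
  rw [dirichletForm_apply]
  refine Finset.sum_congr rfl fun x _ => ?_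
  by_cases hx : x ∈ V
  · simp [hV x hx]
  · have hlaplace : truncatedGreen G V n x - neighborMean G (truncatedGreen G V n) x =
        1 - survivalProb G V n x := by
      simp only [truncatedGreen, map_sum, Finset.sum_apply, ← Finset.sum_sub_distrib,
        ← survivalProb_succ_of_notMem hx]
      rw [Finset.sum_range_sub' fun k => survivalProb G V k x, survivalProb_zero_of_notMem hx]
    rw [hlaplace]
    ring

lemma dirichletForm_truncatedGreen_self_le (G : SimpleGraph α) (V : Set α) (n : ℕ) :
    dirichletForm G (truncatedGreen G V n) (truncatedGreen G V n) ≤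
      ∑ x, G.degree x * truncatedGreen G V n x := by
  have hzero (x : α) (hx : x ∈ V) : truncatedGreen G V n x = 0 := by
    simp [truncatedGreen, survivalProb_of_mem hx]
  have hnonneg (x : α) : 0 ≤ truncatedGreen G V n x := by
    simpa [truncatedGreen] using Finset.sum_nonneg fun k _ => survivalProb_nonneg G V k x
  rw [dirichletForm_truncatedGreen hzero]
  refine Finset.sum_le_sum fun x _ => mul_le_of_le_one_right ?_ ?_
  · exact mul_nonneg (Nat.cast_nonneg _) (hnonneg x)
  · exact sub_le_self _ (survivalProb_nonneg G V n x)

/-- The Dirichlet principle: a test function `h` vanishing on `V` bounds the expected hitting time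
of `V` from below, by Cauchy–Schwarz against the Green function and `n → ∞`. -/
lemma sq_sum_degree_mul_le_dirichletForm (hG : G.Preconnected) {V : Set α} (hV : V.Nonempty)
    {h : α → ℝ} (hh : ∀ x ∈ V, h x = 0) {S : ℝ}
    (hS : ∀ n, ∑ x, G.degree x * truncatedGreen G V n x ≤ S) :
    (∑ x, G.degree x * h x) ^ 2 ≤ S * dirichletForm G h h := by
  have hsurv := tendsto_pi_nhds.mp (neverHitProb_eq_zero hG hV ▸ tendsto_survivalProb G V)
  have hlim : Tendsto (fun n => (∑ x, G.degree x * h x * (1 - survivalProb G V n x)) ^ 2)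
      atTop (nhds ((∑ x, G.degree x * h x) ^ 2)) := by
    simpa using (tendsto_finsetSum Finset.univ fun x _ =>
      ((hsurv x).const_sub 1).const_mul (G.degree x * h x)).pow 2
  refine le_of_tendsto' hlim fun n => ?_
  rw [← dirichletForm_truncatedGreen hh, mul_comm]
  exact (dirichletForm_sq_le G _ _).trans <| mul_le_mul_of_nonneg_left
    ((dirichletForm_truncatedGreen_self_le G V n).trans (hS n)) (dirichletForm_self_nonneg G h)

end DirichletForm

section PathLaw

variable {α : Type*}

/-- The event that a path agrees with `w` at the times `0, …, m`. -/
def pathCylinder (m : ℕ) (w : ℕ → α) : Set (ℕ → α) := {ω | ∀ k, k ≤ m → ω k = w k}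

/-- The event that a path avoids `V` at the times `m, …, m + n`. -/
def avoidEvent (V : Set α) (m n : ℕ) : Set (ℕ → α) := {ω | ∀ j ≤ n, ω (m + j) ∉ V}

lemma pathCylinder_inter_eval_succ (m : ℕ) (w : ℕ → α) (y : α) :
    pathCylinder m w ∩ {ω | ω (m + 1) = y} =
      pathCylinder (m + 1) (Function.update w (m + 1) y) := by
  ext ω
  simp only [pathCylinder, Set.mem_inter_iff, Set.mem_ofPred_eq, Nat.le_succ_iff,
    or_imp, forall_and, forall_eq, Function.update_self]
  refine and_congr_left fun _ => forall₂_congr fun k hk => ?_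
  rw [Function.update_of_ne (by omega)]

lemma pathCylinder_inter_avoidEvent_of_mem {V : Set α} {w : ℕ → α} {m : ℕ} (h : w m ∈ V)
    (n : ℕ) : pathCylinder m w ∩ avoidEvent V m n = ∅ :=
  Set.eq_empty_of_forall_notMem fun _ ⟨hcyl, havoid⟩ =>
    havoid 0 (Nat.zero_le n) (by rwa [add_zero, hcyl m le_rfl])

lemma pathCylinder_subset_avoidEvent_zero {V : Set α} {w : ℕ → α} {m : ℕ} (h : w m ∉ V) :
    pathCylinder m w ⊆ avoidEvent V m 0 := fun ω hω j hj => by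
  rwa [Nat.le_zero.mp hj, add_zero, hω m le_rfl]

lemma avoidEvent_succ (V : Set α) (m n : ℕ) :
    avoidEvent V m (n + 1) = avoidEvent V m 0 ∩ avoidEvent V (m + 1) n := by
  ext ω
  simp only [avoidEvent, Set.mem_inter_iff, Set.mem_ofPred_eq, Nat.le_zero, forall_eq, add_zero]
  constructor
  · intro h
    refine ⟨h 0 (Nat.zero_le _), fun j hj => ?_⟩
    simpa only [add_assoc, add_comm 1] using h (j + 1) (by omega)
  · rintro ⟨h0, h⟩ (_ | j) hj
    · exact h0
    · simpa only [add_assoc, add_comm 1] using h j (by omega)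

lemma avoidEvent_antitone (V : Set α) (m : ℕ) : Antitone (avoidEvent V m) :=
  fun _ _ hkn _ hω j hj => hω j (hj.trans hkn)

variable [MeasurableSpace α] [Countable α] [MeasurableSingletonClass α]

lemma measurableSet_avoidEvent (V : Set α) (m n : ℕ) : MeasurableSet (avoidEvent V m n) := by
  have : avoidEvent V m n = ⋂ j ≤ n, (fun ω => ω (m + j)) ⁻¹' Vᶜ := by
    ext ω; simp [avoidEvent]
  rw [this]
  exact .biInter (Set.to_countable _) fun j _ =>
    measurable_pi_apply _ (Set.to_countable _).measurableSet

lemma measure_eq_tsum_inter_fiber {Ω : Type*} [MeasurableSpace Ω] (μ : Measure Ω) (S : Set Ω)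
    {f : Ω → α} (hf : Measurable f) : μ S = ∑' y, μ (S ∩ {ω | f ω = y}) := by
  have hfiber (y : α) : MeasurableSet {ω | f ω = y} := hf (measurableSet_singleton y)
  have hcover : ⋃ y, {ω | f ω = y} = Set.univ := Set.iUnion_eq_univ_iff.mpr fun ω => ⟨f ω, rfl⟩
  rw [← Measure.restrict_apply_univ, ← hcover,
    measure_iUnion (fun y z hyz => Set.disjoint_left.mpr fun ω hy hz => hyz (hy.symm.trans hz))
      hfiber]
  simp_rw [Measure.restrict_apply (hfiber _), Set.inter_comm]

variable (μ : Measure (ℕ → α)) (S : Set (ℕ → α))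

lemma measure_eq_tsum_pathCylinder_zero :
    μ S = ∑' x, μ (pathCylinder 0 (fun _ => x) ∩ S) := by
  rw [measure_eq_tsum_inter_fiber μ S (measurable_pi_apply 0)]
  simp [pathCylinder, Set.inter_comm]

lemma measure_pathCylinder_inter_eq_tsum (m : ℕ) (w : ℕ → α) :
    μ (pathCylinder m w ∩ S) =
      ∑' y, μ (pathCylinder (m + 1) (Function.update w (m + 1) y) ∩ S) := by
  rw [measure_eq_tsum_inter_fiber μ _ (measurable_pi_apply (m + 1))]
  simp_rw [Set.inter_right_comm _ S, pathCylinder_inter_eval_succ]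

end PathLaw

section GridGraph

/-- The nearest-neighbour graph on `Fin d → R`: the lattice for `R = ℤ`, the torus for
`R = ZMod N`. -/
def gridGraph (d : ℕ) (R : Type*) [AddGroupWithOne R] : SimpleGraph (Fin d → R) where
  Adj := adj
  symm := ⟨fun _ _ ⟨hne, i, hi, hj⟩ => ⟨hne.symm, i, hi.symm, fun j hji => (hj j hji).symm⟩⟩
  loopless := ⟨fun _ h => h.1 rfl⟩

variable {d : ℕ} {R : Type*} [AddGroupWithOne R]

lemma mem_neighborFinset_iff_adj [(gridGraph d R).LocallyFinite] {x y : Fin d → R} :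
    y ∈ (gridGraph d R).neighborFinset x ↔ adj x y := SimpleGraph.mem_neighborFinset ..

end GridGraph

section WalkLaw

variable {d : ℕ} {R : Type*} [AddGroupWithOne R] [(gridGraph d R).LocallyFinite]

lemma tsum_srwStep_mul (x : Fin d → R) (v : (Fin d → R) → ℝ≥0∞) :
    ∑' y, srwStep x y * v y =
      ((2 * d : ℕ) : ℝ≥0∞)⁻¹ * ∑ y ∈ (gridGraph d R).neighborFinset x, v y := by
  rw [tsum_eq_sum (s := (gridGraph d R).neighborFinset x), Finset.mul_sum]
  · refine Finset.sum_congr rfl fun y hy => ?_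
    rw [srwStep, if_pos (mem_neighborFinset_iff_adj.mp hy)]
  · intro y hy
    rw [srwStep, if_neg (mt mem_neighborFinset_iff_adj.mpr hy), zero_mul]

lemma tsum_srwStep_mul_ofReal (hreg : (gridGraph d R).IsRegularOfDegree (2 * d)) (x : Fin d → R)
    {v : (Fin d → R) → ℝ} (hv : 0 ≤ v) :
    ∑' y, srwStep x y * ENNReal.ofReal (v y) =
      ENNReal.ofReal (neighborMean (gridGraph d R) v x) := by
  rw [tsum_srwStep_mul, ← ENNReal.ofReal_sum_of_nonneg fun y _ => hv y, neighborMean_apply,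
    hreg.degree_eq, ENNReal.ofReal_mul (by positivity)]
  rcases d.eq_zero_or_pos with rfl | hd
  · have hempty : (gridGraph 0 R).neighborFinset x = ∅ := by
      rw [← Finset.card_eq_zero, SimpleGraph.card_neighborFinset_eq_degree, hreg.degree_eq,
        mul_zero]
    rw [hempty, Finset.sum_empty, ENNReal.ofReal_zero, mul_zero, mul_zero]
  · rw [ENNReal.ofReal_inv_of_pos (by positivity), ENNReal.ofReal_natCast]

variable [MeasurableSpace R] {μ : Measure (ℕ → (Fin d → R))}
  {init : (Fin d → R) → ℝ≥0∞}

omit [(gridGraph d R).LocallyFinite] in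
lemma IsWalkLaw.measure_pathCylinder_zero (hμ : IsWalkLaw μ init) (x : Fin d → R) :
    μ (pathCylinder 0 fun _ => x) = init x := by
  simpa [pathCylinder] using hμ.2 0 fun _ => x

omit [(gridGraph d R).LocallyFinite] in
lemma IsWalkLaw.measure_pathCylinder_update (hμ : IsWalkLaw μ init) (m : ℕ)
    (w : ℕ → (Fin d → R)) (y : Fin d → R) :
    μ (pathCylinder (m + 1) (Function.update w (m + 1) y)) =
      μ (pathCylinder m w) * srwStep (w m) y := by
  have hpath {k : ℕ} (hk : k ≤ m) : Function.update w (m + 1) y k = w k :=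
    Function.update_of_ne (by omega) _ _
  have hprod : ∏ k ∈ Finset.range m, srwStep (Function.update w (m + 1) y k)
      (Function.update w (m + 1) y (k + 1)) = ∏ k ∈ Finset.range m, srwStep (w k) (w (k + 1)) :=
    Finset.prod_congr rfl fun k hk => by
      rw [hpath (Finset.mem_range.mp hk).le, hpath (Finset.mem_range.mp hk)]
  rw [pathCylinder, pathCylinder, hμ.2, hμ.2, Finset.prod_range_succ, hprod, hpath (Nat.zero_le m),
    hpath le_rfl, Function.update_self, mul_assoc]

variable [MeasurableSingletonClass R] [Countable R]

/-- All the mass sitting at `x` moves on in one step, so `x` has the `2 * d` neighbours between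
which `srwStep` splits it. -/
lemma IsWalkLaw.degree_eq (hμ : IsWalkLaw μ init) {x : Fin d → R} (h0 : init x ≠ 0)
    (htop : init x ≠ ∞) : (gridGraph d R).degree x = 2 * d := by
  have hmass : init x = init x * (((2 * d : ℕ) : ℝ≥0∞)⁻¹ * (gridGraph d R).degree x) := by
    calc init x = μ (pathCylinder 0 (fun _ => x) ∩ Set.univ) := by
          rw [Set.inter_univ, hμ.measure_pathCylinder_zero]
      _ = ∑' y, init x * (srwStep x y * 1) := by
          rw [measure_pathCylinder_inter_eq_tsum]
          simp_rw [Set.inter_univ, hμ.measure_pathCylinder_update, hμ.measure_pathCylinder_zero,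
            mul_one]
      _ = _ := by rw [ENNReal.tsum_mul_left, tsum_srwStep_mul, Finset.sum_const, nsmul_one,
          SimpleGraph.card_neighborFinset_eq_degree]
  have hone := (ENNReal.mul_right_inj h0 htop).mp ((mul_one _).trans hmass)
  exact_mod_cast (inv_inj.mp (ENNReal.eq_inv_of_mul_eq_one_left hone.symm)).symm

variable (hreg : (gridGraph d R).IsRegularOfDegree (2 * d))
include hreg

lemma IsWalkLaw.measure_pathCylinder_inter_of_forall_succ (hμ : IsWalkLaw μ init)
    {S : Set (ℕ → (Fin d → R))} {v : (Fin d → R) → ℝ} (hv : 0 ≤ v) {m : ℕ} {w : ℕ → (Fin d → R)}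
    (hS : ∀ y, μ (pathCylinder (m + 1) (Function.update w (m + 1) y) ∩ S) =
      μ (pathCylinder (m + 1) (Function.update w (m + 1) y)) * ENNReal.ofReal (v y)) :
    μ (pathCylinder m w ∩ S) =
      μ (pathCylinder m w) * ENNReal.ofReal (neighborMean (gridGraph d R) v (w m)) := by
  rw [measure_pathCylinder_inter_eq_tsum]
  simp_rw [hS, hμ.measure_pathCylinder_update, mul_assoc]
  rw [ENNReal.tsum_mul_left, tsum_srwStep_mul_ofReal hreg _ hv]

lemma IsWalkLaw.measure_pathCylinder_inter_avoidEvent (hμ : IsWalkLaw μ init)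
    (V : Set (Fin d → R)) (n m : ℕ) (w : ℕ → (Fin d → R)) :
    μ (pathCylinder m w ∩ avoidEvent V m n) =
      μ (pathCylinder m w) * ENNReal.ofReal (survivalProb (gridGraph d R) V n (w m)) := by
  by_cases hw : w m ∈ V
  · simp [pathCylinder_inter_avoidEvent_of_mem hw, survivalProb_of_mem hw]
  have hstart := Set.inter_eq_left.mpr (pathCylinder_subset_avoidEvent_zero hw)
  induction n generalizing m w with
  | zero => simp [hstart, survivalProb_zero_of_notMem hw]
  | succ n ih =>
    rw [avoidEvent_succ, ← Set.inter_assoc, hstart, survivalProb_succ_of_notMem hw]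
    refine hμ.measure_pathCylinder_inter_of_forall_succ hreg (survivalProb_nonneg _ V n) fun y => ?_
    by_cases hy : y ∈ V
    · rw [pathCylinder_inter_avoidEvent_of_mem (by simpa), survivalProb_of_mem hy]
      simp
    · have hy' : Function.update w (m + 1) y (m + 1) ∉ V := by simpa
      simpa using ih (m + 1) _ hy' (Set.inter_eq_left.mpr (pathCylinder_subset_avoidEvent_zero hy'))

lemma IsWalkLaw.measure_avoidEvent_zero (hμ : IsWalkLaw μ init) (V : Set (Fin d → R)) (n : ℕ) :
    μ (avoidEvent V 0 n) =
      ∑' x, init x * ENNReal.ofReal (survivalProb (gridGraph d R) V n x) := by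
  rw [measure_eq_tsum_pathCylinder_zero]
  simp_rw [hμ.measure_pathCylinder_inter_avoidEvent hreg, hμ.measure_pathCylinder_zero]

lemma IsWalkLaw.measure_avoidEvent_one {x : Fin d → R} (hμ : IsWalkLaw μ (pointInit x))
    (V : Set (Fin d → R)) (n : ℕ) : μ (avoidEvent V 1 n) =
      ENNReal.ofReal (neighborMean (gridGraph d R) (survivalProb (gridGraph d R) V n) x) := by
  rw [measure_eq_tsum_pathCylinder_zero, tsum_eq_single x]
  · rw [hμ.measure_pathCylinder_inter_of_forall_succ hreg (survivalProb_nonneg (gridGraph d R) V n)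
      fun y => ?_]
    · simp [hμ.measure_pathCylinder_zero, pointInit]
    · simpa using hμ.measure_pathCylinder_inter_avoidEvent hreg V n 1 (Function.update _ 1 y)
  · intro y hy
    refine measure_mono_null Set.inter_subset_left ?_
    rw [hμ.measure_pathCylinder_zero, pointInit, if_neg hy]

end WalkLaw

section Capacity

/-- The probability that simple random walk on `G` started at `x` does not visit `V` at any time
`n ≥ 1`. -/
def escapeProb {α : Type*} (G : SimpleGraph α) [G.LocallyFinite] (V : Set α) : α → ℝ :=
  neighborMean G (neverHitProb G V)

lemma escapeProb_nonneg {α : Type*} (G : SimpleGraph α) [G.LocallyFinite] (V : Set α) :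
    0 ≤ escapeProb G V := neighborMean_nonneg G (neverHitProb_nonneg G V)

variable {d : ℕ}

lemma adj_int_iff {x y : Lat d} :
    adj x y ↔ ∃ (i : Fin d) (u : ℤˣ), Function.update x i (x i + u) = y := by
  constructor
  · rintro ⟨-, i, hi | hi, hj⟩
    · exact ⟨i, 1, Function.update_eq_iff.mpr ⟨by simp [hi], hj⟩⟩
    · exact ⟨i, -1, Function.update_eq_iff.mpr ⟨by simp [hi], hj⟩⟩
  · rintro ⟨i, u, rfl⟩
    refine ⟨fun h => u.ne_zero (by simpa using congrFun h i), i, ?_, fun j hj => by simp [hj]⟩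
    rcases Int.units_eq_one_or u with rfl | rfl <;> simp

instance : (gridGraph d ℤ).LocallyFinite := fun x =>
  ((Set.finite_range fun p : Fin d × ℤˣ => Function.update x p.1 (x p.1 + p.2)).subset
    fun _ hy => let ⟨i, u, h⟩ := adj_int_iff.mp hy; ⟨(i, u), h⟩).fintype

lemma update_add_unit_injective (x : Lat d) :
    Function.Injective fun p : Fin d × ℤˣ => Function.update x p.1 (x p.1 + p.2) := by
  rintro ⟨i, u⟩ ⟨j, v⟩ h
  have hi := congrFun h i
  rcases eq_or_ne i j with rfl | hij
  · simpa [Units.ext_iff] using hi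
  · simp [hij] at hi

lemma sum_neighborFinset_int (x : Lat d) (v : Lat d → ℝ) :
    ∑ y ∈ (gridGraph d ℤ).neighborFinset x, v y =
      ∑ i, (v (Function.update x i (x i + 1)) + v (Function.update x i (x i - 1))) := by
  have himage : (gridGraph d ℤ).neighborFinset x =
      Finset.univ.map ⟨_, update_add_unit_injective x⟩ := by
    ext y
    rw [mem_neighborFinset_iff_adj, adj_int_iff]
    simp
  simp [himage, Fintype.sum_prod_type, UnitsInt.univ, sub_eq_add_neg]

lemma isRegularOfDegree_gridGraph_int : (gridGraph d ℤ).IsRegularOfDegree (2 * d) := fun x => by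
  have hcard := sum_neighborFinset_int x fun _ => 1
  rw [Finset.sum_const, SimpleGraph.card_neighborFinset_eq_degree] at hcard
  simp only [nsmul_eq_mul, mul_one, Finset.sum_const, Finset.card_univ, Fintype.card_fin] at hcard
  have hdegree : ((gridGraph d ℤ).degree x : ℝ) = ((2 * d : ℕ) : ℝ) := by
    push_cast
    linarith
  exact_mod_cast hdegree

lemma IsWalkLaw.measure_escEvent {x : Lat d} {μ : Measure (ℕ → Lat d)}
    (hμ : IsWalkLaw μ (pointInit x)) (W : Set (Lat d)) :
    (μ (escEvent W)).toReal = escapeProb (gridGraph d ℤ) W x := by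
  have := hμ.1
  have hinter : escEvent W = ⋂ n, avoidEvent W 1 n := by
    ext ω
    simp only [escEvent, avoidEvent, Set.mem_iInter, Set.mem_ofPred_eq]
    refine ⟨fun h n j _ => h _ (by omega), fun h n hn => ?_⟩
    simpa [Nat.add_sub_cancel' hn] using h (n - 1) (n - 1) le_rfl
  have hlim := tendsto_measure_iInter_atTop (μ := μ)
    (fun n => (measurableSet_avoidEvent W 1 n).nullMeasurableSet) (avoidEvent_antitone W 1)
    ⟨0, measure_ne_top _ _⟩
  rw [← hinter] at hlim
  refine tendsto_nhds_unique ((ENNReal.tendsto_toReal (measure_ne_top _ _)).comp hlim) ?_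
  refine (tendsto_pi_nhds.mp (tendsto_neighborMean _ (tendsto_survivalProb _ W)) x).congr
    fun n => ?_
  rw [Function.comp_apply, Function.comp_apply,
    hμ.measure_avoidEvent_one isRegularOfDegree_gridGraph_int,
    ENNReal.toReal_ofReal (neighborMean_nonneg _ (survivalProb_nonneg _ W n) x)]

/-- The capacity of `W ⊆ ℤ^d`, the number which `IsCap` describes through path measures. -/
def capacity (W : Set (Lat d)) : ℝ := ∑ᶠ x ∈ W, escapeProb (gridGraph d ℤ) W x

lemma capacity_nonneg (W : Set (Lat d)) : 0 ≤ capacity W :=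
  finsum_nonneg fun x => finsum_nonneg fun _ => escapeProb_nonneg _ W x

lemma IsCap.eq_capacity {W : Set (Lat d)} {r : ℝ} (h : IsCap d W r) : r = capacity W := by
  obtain ⟨μ, hμ, rfl⟩ := h
  exact finsum_mem_congr rfl fun x _ => (hμ x).measure_escEvent W

end Capacity

section Torus

variable {d N : ℕ} [NeZero N]

lemma reachable_update_torus (x : Torus d N) (i : Fin d) (a : ZMod N) :
    (gridGraph d (ZMod N)).Reachable x (Function.update x i a) := by
  have hstep (y : Torus d N) :
      (gridGraph d (ZMod N)).Reachable y (Function.update y i (y i + 1)) := by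
    by_cases hy : y = Function.update y i (y i + 1)
    · rw [← hy]
    · exact SimpleGraph.Adj.reachable ⟨hy, i, by simp, fun j hj => by simp [hj]⟩
  have hadd (k : ℕ) : (gridGraph d (ZMod N)).Reachable x (Function.update x i (x i + k)) := by
    induction k with
    | zero => simp
    | succ k ih => simpa [add_assoc] using ih.trans (hstep _)
  simpa using hadd (a - x i).val

lemma preconnected_gridGraph_zmod : (gridGraph d (ZMod N)).Preconnected := by
  intro x y
  have hpiecewise (s : Finset (Fin d)) :
      (gridGraph d (ZMod N)).Reachable x (s.piecewise y x) := by
    induction s using Finset.induction_on with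
    | empty => simp
    | insert i s _ ih =>
      rw [Finset.piecewise_insert]
      exact ih.trans (reachable_update_torus _ i _)
  simpa using hpiecewise Finset.univ

lemma torusToLat_apply (x : Torus d N) (i : Fin d) : torusToLat x i = (x i).valMinAbs := by
  have h : ((x i).val : ℝ) ≤ (N : ℝ) / 2 ↔ (x i).val ≤ N / 2 := by
    rw [Nat.le_div_iff_mul_le two_pos, le_div_iff₀ two_pos]
    norm_cast
  rw [torusToLat, ZMod.valMinAbs_def_pos]
  exact if_congr h rfl rfl

lemma torusToLat_injective : Function.Injective (torusToLat : Torus d N → Lat d) := fun x y h => by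
  ext i
  simpa [torusToLat_apply] using congrFun h i

lemma abs_torusToLat_le {x : Torus d N} {R : ℝ} (hx : x ∈ torusBall 0 R) (i : Fin d) :
    |(torusToLat x i : ℝ)| ≤ R := by
  have hcoord : (torusToLat x i).natAbs = min (0 - x i).val (x i - 0).val := by
    rw [torusToLat_apply, ZMod.valMinAbs_natAbs_eq_min, zero_sub, sub_zero, ZMod.neg_val]
    split_ifs with h
    · simp [h]
    · exact min_comm _ _
  have hdist : (torusToLat x i).natAbs ≤ torusDist (0 : Torus d N) x :=
    hcoord ▸ Finset.le_sup
      (f := fun i => min ((0 : Torus d N) i - x i).val (x i - (0 : Torus d N) i).val)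
      (Finset.mem_univ i)
  calc |(torusToLat x i : ℝ)| = ((torusToLat x i).natAbs : ℝ) := by
        rw [Nat.cast_natAbs, Int.cast_abs]
    _ ≤ (torusDist (0 : Torus d N) x : ℝ) := by exact_mod_cast hdist
    _ ≤ R := hx

lemma adj_torusToLat {x y : Torus d N} (hxy : adj x y)
    (hx : ∀ i, 2 * (|torusToLat x i| + 1) < N) : adj (torusToLat x) (torusToLat y) := by
  obtain ⟨hne, i, hstep, hrest⟩ := hxy
  refine ⟨fun h => hne (torusToLat_injective h), i, ?_, fun j hj => ?_⟩
  · have hi := hx i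
    have := neg_abs_le (torusToLat x i)
    have := le_abs_self (torusToLat x i)
    simp only [torusToLat_apply] at *
    refine hstep.imp (fun h => ?_) fun h => ?_
    · rw [ZMod.valMinAbs_spec]
      exact ⟨by push_cast [ZMod.coe_valMinAbs]; exact h, by linarith, by linarith⟩
    · rw [eq_comm, ← eq_sub_iff_add_eq, ZMod.valMinAbs_spec]
      exact ⟨by push_cast [ZMod.coe_valMinAbs]; rw [h, add_sub_cancel_right], by linarith,
        by linarith⟩
  · rw [torusToLat_apply, torusToLat_apply, hrest j hj]

lemma sum_neighborFinset_torusToLat_le {x : Torus d N} (hx : ∀ i, 2 * (|torusToLat x i| + 1) < N)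
    {v : Lat d → ℝ} (hv : 0 ≤ v) :
    ∑ y ∈ (gridGraph d (ZMod N)).neighborFinset x, v (torusToLat y) ≤
      ∑ z ∈ (gridGraph d ℤ).neighborFinset (torusToLat x), v z := by
  rw [← Finset.sum_image torusToLat_injective.injOn]
  refine Finset.sum_le_sum_of_subset_of_nonneg ?_ fun z _ _ => hv z
  refine Finset.image_subset_iff.mpr fun y hy => ?_
  rw [mem_neighborFinset_iff_adj] at hy ⊢
  exact adj_torusToLat hy hx

lemma card_filter_abs_valMinAbs_le {ρ : ℝ} (hρ : 0 ≤ ρ) :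
    ((Finset.univ.filter fun a : ZMod N => |(a.valMinAbs : ℝ)| ≤ ρ).card : ℝ) ≤ 2 * ρ + 1 := by
  have hcard : (Finset.univ.filter fun a : ZMod N => |(a.valMinAbs : ℝ)| ≤ ρ).card ≤
      (Finset.Icc (-⌊ρ⌋) ⌊ρ⌋).card := by
    refine Finset.card_le_card_of_injOn ZMod.valMinAbs (fun a ha => ?_)
      ZMod.injective_valMinAbs.injOn
    have ha := abs_le.mp (Finset.mem_filter.mp ha).2
    rw [Finset.coe_Icc, Set.mem_Icc, neg_le, Int.le_floor, Int.le_floor]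
    constructor <;> push_cast <;> linarith
  have hIcc : ((Finset.Icc (-⌊ρ⌋) ⌊ρ⌋).card : ℤ) = 2 * ⌊ρ⌋ + 1 := by
    have := Int.floor_nonneg.mpr hρ
    rw [Int.card_Icc, Int.toNat_of_nonneg (by omega)]
    ring
  calc _ ≤ (((Finset.Icc (-⌊ρ⌋) ⌊ρ⌋).card : ℤ) : ℝ) := by exact_mod_cast hcard
    _ = 2 * ⌊ρ⌋ + 1 := by rw [hIcc]; norm_cast
    _ ≤ 2 * ρ + 1 := by gcongr; exact Int.floor_le ρ

lemma card_filter_abs_torusToLat_le {ρ : ℝ} (hρ : 0 ≤ ρ) :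
    ((Finset.univ.filter fun x : Torus d N => ∀ i, |(torusToLat x i : ℝ)| ≤ ρ).card : ℝ) ≤
      (2 * ρ + 1) ^ d := by
  have hbox : (Finset.univ.filter fun x : Torus d N => ∀ i, |(torusToLat x i : ℝ)| ≤ ρ) =
      Fintype.piFinset fun _ => Finset.univ.filter fun a : ZMod N => |(a.valMinAbs : ℝ)| ≤ ρ := by
    ext x
    simp [torusToLat_apply, Fintype.mem_piFinset]
  rw [hbox, Fintype.card_piFinset_const, Nat.cast_pow]
  exact pow_le_pow_left₀ (Nat.cast_nonneg _) (card_filter_abs_valMinAbs_le hρ) d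

end Torus

section TruncatedPotential

variable {d N : ℕ}

/-- The truncation at height `c` of the function `neverHitProb` of `W ⊆ ℤ^d`, transported to the
torus; off a large box it equals `c`. -/
def truncatedPotential (W : Set (Lat d)) (c : ℝ) (x : Torus d N) : ℝ :=
  min (neverHitProb (gridGraph d ℤ) W (torusToLat x)) c

variable {W : Set (Lat d)} {c : ℝ}

lemma truncatedPotential_of_mem (hc : 0 ≤ c) {x : Torus d N} (hx : torusToLat x ∈ W) :
    truncatedPotential W c x = 0 := by
  rw [truncatedPotential, neverHitProb_of_mem hx, min_eq_left hc]

variable [NeZero N]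

lemma degree_mul_neighborMean_sub_truncatedPotential_le
    (hreg : (gridGraph d (ZMod N)).IsRegularOfDegree (2 * d)) {x : Torus d N}
    (hxc : truncatedPotential W c x < c) (hx : ∀ i, 2 * (|torusToLat x i| + 1) < N) :
    2 * d * (neighborMean (gridGraph d (ZMod N)) (truncatedPotential W c) x -
        truncatedPotential W c x) ≤
      if torusToLat x ∈ W then 2 * d * escapeProb (gridGraph d ℤ) W (torusToLat x) else 0 := by
  have hvalue : truncatedPotential W c x = neverHitProb (gridGraph d ℤ) W (torusToLat x) :=
    min_eq_left ((min_lt_iff.mp hxc).resolve_right (lt_irrefl c)).le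
  have hmean : 2 * d * neighborMean (gridGraph d (ZMod N)) (truncatedPotential W c) x ≤
      2 * d * escapeProb (gridGraph d ℤ) W (torusToLat x) := by
    have htorus := degree_mul_neighborMean (gridGraph d (ZMod N)) (truncatedPotential W c) x
    have hlattice := degree_mul_neighborMean (gridGraph d ℤ)
      (neverHitProb (gridGraph d ℤ) W) (torusToLat x)
    rw [hreg.degree_eq] at htorus
    rw [isRegularOfDegree_gridGraph_int.degree_eq] at hlattice
    push_cast at htorus hlattice
    rw [escapeProb, htorus, hlattice]
    exact (Finset.sum_le_sum fun y _ => min_le_left _ _).trans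
      (sum_neighborFinset_torusToLat_le hx (neverHitProb_nonneg _ W))
  rw [mul_sub, hvalue]
  split_ifs with hW
  · rwa [neverHitProb_of_mem hW, mul_zero, sub_zero]
  · rw [escapeProb, neighborMean_neverHitProb hW] at hmean
    exact sub_nonpos.mpr hmean

lemma sub_truncatedPotential_mul_le (hreg : (gridGraph d (ZMod N)).IsRegularOfDegree (2 * d))
    (hc : 0 ≤ c) (V : Set (Torus d N)) (x : Torus d N)
    (hfar : truncatedPotential (torusToLat '' V) c x < c → ∀ i, 2 * (|torusToLat x i| + 1) < N) :
    (c - truncatedPotential (torusToLat '' V) c x) *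
        (2 * d * (neighborMean (gridGraph d (ZMod N)) (truncatedPotential (torusToLat '' V) c) x -
          truncatedPotential (torusToLat '' V) c x)) ≤
      if x ∈ V then c * (2 * d * escapeProb (gridGraph d ℤ) (torusToLat '' V) (torusToLat x))
      else 0 := by
  have hle : truncatedPotential (torusToLat '' V) c x ≤ c := min_le_right _ _
  rcases hle.lt_or_eq with hxc | hxc
  · have hmul := mul_le_mul_of_nonneg_left (degree_mul_neighborMean_sub_truncatedPotential_le
      hreg hxc (hfar hxc)) (sub_nonneg.mpr hle)
    rw [torusToLat_injective.mem_set_image] at hmul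
    split_ifs at hmul ⊢ with hxV
    · exact hmul.trans_eq
        (by rw [truncatedPotential_of_mem hc (Set.mem_image_of_mem _ hxV), sub_zero])
    · rwa [mul_zero] at hmul
  · rw [hxc, sub_self, zero_mul]
    have hescape := escapeProb_nonneg (gridGraph d ℤ) (torusToLat '' V) (torusToLat x)
    split_ifs
    exacts [mul_nonneg hc (mul_nonneg (by positivity) hescape), le_rfl]

lemma dirichletForm_truncatedPotential_le
    (hreg : (gridGraph d (ZMod N)).IsRegularOfDegree (2 * d)) (V : Set (Torus d N)) (hc : 0 ≤ c)
    (hfar : ∀ x : Torus d N, truncatedPotential (torusToLat '' V) c x < c →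
      ∀ i, 2 * (|torusToLat x i| + 1) < N) :
    dirichletForm (gridGraph d (ZMod N)) (truncatedPotential (torusToLat '' V) c)
      (truncatedPotential (torusToLat '' V) c) ≤ 2 * d * (c * capacity (torusToLat '' V)) := by
  let g : Torus d N → ℝ := truncatedPotential (torusToLat '' V) c
  calc dirichletForm (gridGraph d (ZMod N)) g g =
        ∑ x, (c - g x) * (2 * d * (neighborMean (gridGraph d (ZMod N)) g x - g x)) := by
        have hconst := dirichletForm_const_left (gridGraph d (ZMod N)) c g
        rw [← sub_zero (dirichletForm _ g g), ← hconst]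
        simp only [dirichletForm_apply, ← Finset.sum_sub_distrib, hreg.degree_eq]
        push_cast
        refine Finset.sum_congr rfl fun x _ => ?_
        ring
    _ ≤ ∑ x, if x ∈ V then
          c * (2 * d * escapeProb (gridGraph d ℤ) (torusToLat '' V) (torusToLat x)) else 0 :=
        Finset.sum_le_sum fun x _ => sub_truncatedPotential_mul_le hreg hc V x (hfar x)
    _ = 2 * d * (c * capacity (torusToLat '' V)) := by
        rw [capacity, finsum_mem_image torusToLat_injective.injOn,
          finsum_mem_eq_finite_toFinset_sum _ V.toFinite, ← Finset.sum_filter, ← Finset.mul_sum,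
          ← Finset.mul_sum, mul_left_comm]
        congr! 4
        ext x
        simp

lemma sum_truncatedPotential_ge {ρ : ℝ} (hc : 0 ≤ c) (hρ : 0 ≤ ρ)
    (hfar : ∀ x : Torus d N, truncatedPotential W c x < c → ∀ i, |(torusToLat x i : ℝ)| ≤ ρ) :
    c * ((N : ℝ) ^ d - (2 * ρ + 1) ^ d) ≤ ∑ x : Torus d N, truncatedPotential W c x := by
  set B := Finset.univ.filter fun x : Torus d N => ∀ i, |(torusToLat x i : ℝ)| ≤ ρ
  have hcompl (x : Torus d N) (hx : x ∈ Bᶜ) : c ≤ truncatedPotential W c x := by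
    by_contra! hlt
    exact Finset.mem_compl.mp hx (Finset.mem_filter.mpr ⟨Finset.mem_univ x, hfar x hlt⟩)
  have hcard : (Bᶜ.card : ℝ) = (N : ℝ) ^ d - B.card := by
    rw [Finset.card_compl, Nat.cast_sub B.card_le_univ]
    simp
  calc c * ((N : ℝ) ^ d - (2 * ρ + 1) ^ d) ≤ c * Bᶜ.card := by
        rw [hcard]
        gcongr
        exact card_filter_abs_torusToLat_le hρ
    _ = ∑ _ ∈ Bᶜ, c := by rw [Finset.sum_const, nsmul_eq_mul, mul_comm]
    _ ≤ ∑ x ∈ Bᶜ, truncatedPotential W c x := Finset.sum_le_sum hcompl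
    _ ≤ ∑ x, truncatedPotential W c x :=
        Finset.sum_le_sum_of_subset_of_nonneg (Finset.subset_univ _) fun x _ _ =>
          le_min (neverHitProb_nonneg (gridGraph d ℤ) W _) hc

end TruncatedPotential

section Barrier

lemma one_add_rpow_neg_quarter_le {z : ℝ} (hz : |z| ≤ 1 / 10) :
    (1 + z) ^ (-(1 / 4) : ℝ) ≤ 1 - z / 4 + 3 / 16 * z ^ 2 := by
  have hbounds := abs_le.mp hz
  have hpow (k : ℕ) : |z ^ (k + 1)| ≤ 1 / 10 := by
    rw [abs_pow]
    exact (pow_le_of_le_one (abs_nonneg z) (by linarith) k.succ_ne_zero).trans hz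
  have hfactor : (1 + z) * (1 - z / 4 + 3 / 16 * z ^ 2) ^ 4 = 1 + z ^ 2 * (1 / 8 + z ^ 1 / 2 -
      69 / 256 * z ^ 2 + 61 / 256 * z ^ 3 - 159 / 2048 * z ^ 4 + 135 / 4096 * z ^ 5 -
      351 / 65536 * z ^ 6 + 81 / 65536 * z ^ 7) := by ring
  have hinv : (1 + z)⁻¹ ≤ (1 - z / 4 + 3 / 16 * z ^ 2) ^ 4 := by
    rw [inv_le_iff_one_le_mul₀' (by linarith), hfactor, le_add_iff_nonneg_right]
    refine mul_nonneg (sq_nonneg z) ?_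
    linarith [abs_le.mp (hpow 0), abs_le.mp (hpow 1), abs_le.mp (hpow 2), abs_le.mp (hpow 3),
      abs_le.mp (hpow 4), abs_le.mp (hpow 5), abs_le.mp (hpow 6)]
  calc (1 + z) ^ (-(1 / 4) : ℝ) = (1 + z)⁻¹ ^ (1 / 4 : ℝ) := by
        rw [Real.inv_rpow (by linarith), Real.rpow_neg (by linarith)]
    _ ≤ ((1 - z / 4 + 3 / 16 * z ^ 2) ^ 4) ^ (1 / 4 : ℝ) :=
        Real.rpow_le_rpow (inv_nonneg.mpr (by linarith)) hinv (by norm_num)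
    _ = 1 - z / 4 + 3 / 16 * z ^ 2 := by
        rw [one_div]
        exact Real.pow_rpow_inv_natCast (by nlinarith) (by norm_num)

lemma add_rpow_neg_quarter_add_sub_rpow_neg_quarter_le {t a : ℝ} (ht : 0 < t)
    (ha : 20 * |a| ≤ t) :
    (t + 2 * a) ^ (-(1 / 4) : ℝ) + (t - 2 * a) ^ (-(1 / 4) : ℝ) ≤
      t ^ (-(1 / 4) : ℝ) * (2 + 3 / 2 * (a ^ 2 / t ^ 2)) := by
  have hz : |2 * a / t| ≤ 1 / 10 := by
    rw [abs_div, abs_of_pos ht, div_le_iff₀ ht, abs_mul, abs_two]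
    linarith
  have hbounds := abs_le.mp hz
  have hplus : t + 2 * a = t * (1 + 2 * a / t) := by field_simp
  have hminus : t - 2 * a = t * (1 + -(2 * a / t)) := by field_simp; ring
  rw [hplus, hminus, Real.mul_rpow ht.le (by linarith), Real.mul_rpow ht.le (by linarith),
    ← mul_add]
  refine mul_le_mul_of_nonneg_left ?_ (Real.rpow_nonneg ht.le _)
  calc _ ≤ _ := add_le_add (one_add_rpow_neg_quarter_le hz)
        (one_add_rpow_neg_quarter_le (by rwa [abs_neg]))
    _ = 2 + 3 / 2 * (a ^ 2 / t ^ 2) := by ring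

lemma rpow_neg_quarter_mul_le_sub_one_rpow {t : ℝ} (ht : 1 < t) :
    t ^ (-(1 / 4) : ℝ) * (1 + 1 / (4 * t)) ≤ (t - 1) ^ (-(1 / 4) : ℝ) := by
  have ht0 : 0 < t := by linarith
  have hy : t⁻¹ < 1 := inv_lt_one_of_one_lt₀ ht
  have hy0 : 0 < t⁻¹ := inv_pos.mpr ht0
  have hbernoulli : (1 + -t⁻¹) ^ (1 / 4 : ℝ) ≤ 1 + 1 / 4 * -t⁻¹ :=
    rpow_one_add_le_one_add_mul_self (by linarith) (by norm_num) (by norm_num)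
  have hfactor : t - 1 = t * (1 + -t⁻¹) := by field_simp; ring
  rw [hfactor, Real.mul_rpow ht0.le (by linarith)]
  refine mul_le_mul_of_nonneg_left ?_ (Real.rpow_nonneg ht0.le _)
  rw [Real.rpow_neg (by linarith), le_inv_comm₀ (by positivity) (Real.rpow_pos_of_pos
    (by linarith) _)]
  refine hbernoulli.trans ?_
  have hpos : 0 < 1 + 1 / (4 * t) := by positivity
  have hprod : (1 + 1 / 4 * -t⁻¹) * (1 + 1 / (4 * t)) ≤ 1 := by
    rw [one_div (4 * t), mul_inv]
    nlinarith
  exact (le_div_iff₀ hpos).mpr hprod |>.trans_eq (one_div _)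

variable {d : ℕ}

/-- A function on `ℤ^d` decaying like `|x|^{-1/2}` which is superharmonic when `d ≥ 3`; it plays the
role of the Green function. The shift by `100` keeps the second-order Taylor expansion of the
power accurate at every lattice point. -/
def barrier (x : Lat d) : ℝ := (∑ i, (x i : ℝ) ^ 2 + 100) ^ (-(1 / 4) : ℝ)

lemma barrier_pos (x : Lat d) : 0 < barrier x := by
  unfold barrier
  positivity

lemma sum_sq_update (x : Lat d) (i : Fin d) (a : ℤ) :
    ∑ j, (Function.update x i a j : ℝ) ^ 2 =
      ∑ j, (x j : ℝ) ^ 2 + ((a : ℝ) ^ 2 - (x i : ℝ) ^ 2) := by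
  have hsum := Finset.sum_update_of_mem (Finset.mem_univ i) (fun j => (x j : ℝ) ^ 2) ((a : ℝ) ^ 2)
  have hupdate (j : Fin d) : (Function.update x i a j : ℝ) ^ 2 =
      Function.update (fun j => (x j : ℝ) ^ 2) i ((a : ℝ) ^ 2) j :=
    Function.apply_update (fun _ (b : ℤ) => (b : ℝ) ^ 2) x i a j
  rw [Finset.sum_congr rfl fun j _ => hupdate j, hsum,
    Finset.sum_sdiff_eq_sub (Finset.subset_univ _), Finset.sum_singleton]
  ring

lemma sum_neighborFinset_barrier_le (x : Lat d) {t : ℝ} (ht : t = ∑ j, (x j : ℝ) ^ 2 + 101) :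
    ∑ y ∈ (gridGraph d ℤ).neighborFinset x, barrier y ≤
      t ^ (-(1 / 4) : ℝ) * (2 * d + 3 / 2 * ((t - 101) / t ^ 2)) := by
  have hsq (i : Fin d) : (x i : ℝ) ^ 2 ≤ ∑ j, (x j : ℝ) ^ 2 :=
    Finset.single_le_sum (f := fun j => (x j : ℝ) ^ 2) (fun _ _ => sq_nonneg _) (Finset.mem_univ i)
  have hterm (i : Fin d) :
      barrier (Function.update x i (x i + 1)) + barrier (Function.update x i (x i - 1)) ≤
        t ^ (-(1 / 4) : ℝ) * (2 + 3 / 2 * ((x i : ℝ) ^ 2 / t ^ 2)) := by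
    have ha : 20 * |(x i : ℝ)| ≤ t := by
      nlinarith [hsq i, sq_abs (x i : ℝ), sq_nonneg (|(x i : ℝ)| - 10)]
    convert add_rpow_neg_quarter_add_sub_rpow_neg_quarter_le (by nlinarith [hsq i]) ha using 2 <;>
    · rw [barrier, sum_sq_update, ht]
      push_cast
      ring_nf
  rw [sum_neighborFinset_int]
  calc _ ≤ ∑ i, t ^ (-(1 / 4) : ℝ) * (2 + 3 / 2 * ((x i : ℝ) ^ 2 / t ^ 2)) :=
        Finset.sum_le_sum fun i _ => hterm i
    _ = t ^ (-(1 / 4) : ℝ) * (2 * d + 3 / 2 * ((t - 101) / t ^ 2)) := by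
        rw [← Finset.mul_sum, Finset.sum_add_distrib, ← Finset.mul_sum, ← Finset.sum_div, ht]
        simp [mul_comm]

lemma neighborMean_barrier_lt (hd : 3 ≤ d) (x : Lat d) :
    neighborMean (gridGraph d ℤ) barrier x < barrier x := by
  obtain ⟨t, ht⟩ : ∃ t, t = ∑ j, (x j : ℝ) ^ 2 + 101 := ⟨_, rfl⟩
  have ht1 : 101 ≤ t := by rw [ht, le_add_iff_nonneg_left]; positivity
  have hd' : (3 : ℝ) ≤ d := by exact_mod_cast hd
  have hdt : (t - 101) / t ^ 2 < 1 / t := by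
    rw [div_lt_div_iff₀ (by positivity) (by linarith)]
    nlinarith
  have hbarrier : barrier x = (t - 1) ^ (-(1 / 4) : ℝ) := by rw [barrier, ht]; ring_nf
  rw [neighborMean_apply, isRegularOfDegree_gridGraph_int.degree_eq, inv_mul_lt_iff₀
    (by positivity)]
  calc ∑ y ∈ (gridGraph d ℤ).neighborFinset x, barrier y
      ≤ t ^ (-(1 / 4) : ℝ) * (2 * d + 3 / 2 * ((t - 101) / t ^ 2)) :=
        sum_neighborFinset_barrier_le x ht
    _ < t ^ (-(1 / 4) : ℝ) * (2 * d + d / 2 * (1 / t)) := by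
        gcongr ?_ * (_ + ?_)
        nlinarith [div_nonneg (sub_nonneg.mpr ht1) (sq_nonneg t)]
    _ = (2 * d : ℕ) * (t ^ (-(1 / 4) : ℝ) * (1 + 1 / (4 * t))) := by push_cast; field_simp; ring
    _ ≤ (2 * d : ℕ) * barrier x := by
        rw [hbarrier]
        gcongr
        exact rpow_neg_quarter_mul_le_sub_one_rpow (by linarith)

lemma degree_gridGraph_int_ne_zero (hd : d ≠ 0) (x : Lat d) : (gridGraph d ℤ).degree x ≠ 0 := by
  rw [isRegularOfDegree_gridGraph_int.degree_eq]
  exact mul_ne_zero two_ne_zero hd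

lemma one_sub_neverHitProb_le_barrier (hd : 3 ≤ d) {W : Set (Lat d)} {m : ℝ} (hm : 0 < m)
    (hW : ∀ x ∈ W, m ≤ barrier x) : 1 - neverHitProb (gridGraph d ℤ) W ≤ m⁻¹ • barrier := by
  refine one_sub_neverHitProb_le_of_superharmonic (degree_gridGraph_int_ne_zero (by omega))
    (smul_nonneg (inv_nonneg.mpr hm.le) fun x => (barrier_pos x).le) (fun x hx => ?_) ?_
  · exact (one_le_inv_mul₀ hm).mpr (hW x hx)
  · rw [map_smul]
    exact smul_le_smul_of_nonneg_left (fun x => (neighborMean_barrier_lt hd x).le)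
      (inv_nonneg.mpr hm.le)

lemma rpow_neg_quarter_le_barrier {r : ℝ} (hr : 1 ≤ r) {x : Lat d} (hx : ∀ i, |(x i : ℝ)| ≤ r) :
    ((d + 100) * r ^ 2) ^ (-(1 / 4) : ℝ) ≤ barrier x := by
  refine Real.rpow_le_rpow_of_nonpos (by positivity) ?_ (by norm_num)
  have hsum : ∑ i, (x i : ℝ) ^ 2 ≤ d * r ^ 2 := by
    simpa using Finset.sum_le_sum fun i (_ : i ∈ Finset.univ) => sq_le_sq' (abs_le.mp (hx i)).1
      (abs_le.mp (hx i)).2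
  nlinarith

lemma barrier_le_rpow_neg_quarter {ρ : ℝ} (hρ : 0 < ρ) {x : Lat d} {i : Fin d}
    (hi : ρ ≤ |(x i : ℝ)|) : barrier x ≤ (ρ ^ 2) ^ (-(1 / 4) : ℝ) := by
  refine Real.rpow_le_rpow_of_nonpos (by positivity) ?_ (by norm_num)
  have hsq : (x i : ℝ) ^ 2 ≤ ∑ j, (x j : ℝ) ^ 2 :=
    Finset.single_le_sum (f := fun j => (x j : ℝ) ^ 2) (fun _ _ => sq_nonneg _) (Finset.mem_univ i)
  have := pow_le_pow_left₀ hρ.le hi 2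
  rw [sq_abs] at this
  linarith

lemma abs_le_of_neverHitProb_lt (hd : 3 ≤ d) {W : Set (Lat d)} {r ρ : ℝ} (hr : 1 ≤ r)
    (hρ : 0 < ρ) (hW : ∀ x ∈ W, ∀ i, |(x i : ℝ)| ≤ r) {x : Lat d}
    (hx : neverHitProb (gridGraph d ℤ) W x < 1 - ((d + 100) * (r / ρ) ^ 2) ^ (1 / 4 : ℝ))
    (i : Fin d) : |(x i : ℝ)| ≤ ρ := by
  by_contra! hlt
  have hle := one_sub_neverHitProb_le_barrier hd (by positivity)
    (fun y hy => rpow_neg_quarter_le_barrier hr (hW y hy)) x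
  have hratio : (((d + 100) * r ^ 2) ^ (-(1 / 4) : ℝ))⁻¹ * (ρ ^ 2) ^ (-(1 / 4) : ℝ) =
      ((d + 100) * (r / ρ) ^ 2) ^ (1 / 4 : ℝ) := by
    rw [Real.rpow_neg (by positivity), Real.rpow_neg (by positivity), inv_inv,
      ← Real.inv_rpow (by positivity), ← Real.mul_rpow (by positivity) (by positivity),
      ← div_eq_mul_inv, mul_div_assoc, div_pow]
  have hfar := mul_le_mul_of_nonneg_left (barrier_le_rpow_neg_quarter hρ hlt.le)
    (inv_nonneg.mpr (Real.rpow_nonneg (by positivity : 0 ≤ (d + 100) * r ^ 2) (-(1 / 4))))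
  rw [hratio] at hfar
  simp only [Pi.sub_apply, Pi.one_apply, Pi.smul_apply, smul_eq_mul] at hle
  linarith

lemma capacity_pos (hd : 3 ≤ d) {W : Set (Lat d)} (hW : W.Finite) (hne : W.Nonempty) :
    0 < capacity W := by
  obtain ⟨y, hy, hmin⟩ := Set.exists_min_image W barrier hW hne
  have hmono := neighborMean_mono (gridGraph d ℤ)
    (sub_le_comm.mp (one_sub_neverHitProb_le_barrier hd (barrier_pos y) hmin)) y
  rw [map_sub, map_smul, Pi.sub_apply, Pi.smul_apply, smul_eq_mul,
    neighborMean_one_apply (degree_gridGraph_int_ne_zero (by omega) y), ← div_eq_inv_mul] at hmono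
  have hratio := (div_lt_one (barrier_pos y)).mpr (neighborMean_barrier_lt hd y)
  calc 0 < escapeProb (gridGraph d ℤ) W y := (sub_pos.mpr hratio).trans_le hmono
    _ ≤ capacity W := by
        rw [capacity, finsum_mem_eq_finite_toFinset_sum _ hW]
        exact Finset.single_le_sum (fun x _ => escapeProb_nonneg (gridGraph d ℤ) W x)
          (hW.mem_toFinset.mpr hy)

lemma exists_pos_le_capacity (hd : 3 ≤ d) {B : Set (Lat d)} (hB : B.Finite) :
    ∃ κ : ℝ, 0 < κ ∧ ∀ W ⊆ B, W.Nonempty → κ ≤ capacity W := by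
  have hfin : {W | W ⊆ B ∧ W.Nonempty}.Finite := hB.finite_subsets.subset fun W hW => hW.1
  rcases {W | W ⊆ B ∧ W.Nonempty}.eq_empty_or_nonempty with hempty | hne
  · exact ⟨1, one_pos, fun W hW hWne =>
      (Set.eq_empty_iff_forall_notMem.mp hempty W ⟨hW, hWne⟩).elim⟩
  · obtain ⟨W₀, ⟨hW₀, hW₀ne⟩, hmin⟩ := Set.exists_min_image _ capacity hfin hne
    exact ⟨capacity W₀, capacity_pos hd (hB.subset hW₀) hW₀ne, fun W hW hWne => hmin W ⟨hW, hWne⟩⟩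

end Barrier

section HittingTime

lemma IsIIDExp.ae_pos {ν : Measure (ℕ → ℝ)} (hν : IsIIDExp ν) : ∀ᵐ g ∂ν, ∀ k, 0 < g k := by
  have := hν.1
  rw [ae_all_iff]
  intro k
  have hmeas : MeasurableSet {g : ℕ → ℝ | ∀ j ≤ k, 0 < g j} := by measurability
  have hone : ν {g | ∀ j ≤ k, 0 < g j} = 1 := by simpa using hν.2 k 0 fun _ => le_rfl
  have hae : ∀ᵐ g ∂ν, ∀ j ≤ k, 0 < g j := (mem_ae_iff_prob_eq_one hmeas).mpr hone
  exact hae.mono fun g hg => hg k le_rfl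

lemma IsIIDExp.one_le_lintegral {ν : Measure (ℕ → ℝ)} (hν : IsIIDExp ν) (k : ℕ) :
    1 ≤ ∫⁻ g, ENNReal.ofReal (g k) ∂ν := by
  rw [lintegral_eq_lintegral_meas_lt ν (hν.ae_pos.mono fun g hg => (hg k).le)
    (measurable_pi_apply k).aemeasurable]
  calc (1 : ℝ≥0∞) = ∫⁻ t in Set.Ioi (0 : ℝ), ENNReal.ofReal (Real.exp (-t)) := by
        rw [← ofReal_integral_eq_lintegral_ofReal (integrableOn_exp_neg_Ioi 0)
          (ae_of_all _ fun t => (Real.exp_pos _).le), integral_exp_neg_Ioi_zero,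
          ENNReal.ofReal_one]
    _ ≤ ∫⁻ t in Set.Ioi (0 : ℝ), ν {g | t < g k} := ?_
  refine setLIntegral_mono' measurableSet_Ioi fun t ht => ?_
  have htail := hν.2 k (Pi.single k t) fun j =>
    (Pi.single_nonneg (α := fun _ => ℝ)).mpr (Set.mem_Ioi.mp ht).le j
  rw [Finset.sum_pi_single', if_pos (Finset.self_mem_range_succ k)] at htail
  rw [← htail]
  exact measure_mono fun g hg => by simpa using hg k le_rfl

variable {d N : ℕ}

lemma nJumps_sum_range {g : ℕ → ℝ} (hg : ∀ k, 0 < g k) (m : ℕ) :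
    nJumps g (∑ k ∈ Finset.range m, g k) = m := by
  have hmono : StrictMono fun n => ∑ k ∈ Finset.range n, g k :=
    strictMono_nat_of_lt_succ fun n => by simpa [Finset.sum_range_succ] using hg n
  have hIic : {n | ∑ k ∈ Finset.range n, g k ≤ ∑ k ∈ Finset.range m, g k} = Set.Iic m :=
    Set.ext fun n => hmono.le_iff_le
  rw [nJumps, hIic, csSup_Iic]

lemma sum_range_le_of_le_nJumps {g : ℕ → ℝ} (hg : 0 ≤ g) {t : ℝ} (ht : 0 ≤ t) {m : ℕ}
    (hm : m ≤ nJumps g t) : ∑ k ∈ Finset.range m, g k ≤ t := by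
  have hmono : Monotone fun n => ∑ k ∈ Finset.range n, g k :=
    monotone_nat_of_le_succ fun n => by simpa [Finset.sum_range_succ] using hg n
  by_cases hbdd : BddAbove {n | ∑ k ∈ Finset.range n, g k ≤ t}
  · have hmem : nJumps g t ∈ {n | ∑ k ∈ Finset.range n, g k ≤ t} :=
      Nat.sSup_mem ⟨0, by simpa⟩ hbdd
    exact (hmono hm).trans hmem
  · obtain ⟨n, hn, hmn⟩ := not_bddAbove_iff.mp hbdd m
    exact (hmono hmn.le).trans hn

lemma hitT_nonneg (V : Set (Torus d N)) : 0 ≤ hitT V := fun _ => Real.sInf_nonneg fun _ ht => ht.1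

lemma hitT_univ : hitT (Set.univ : Set (Torus d N)) = 0 := by
  ext ω
  have hIci : {t : ℝ | 0 ≤ t ∧ ctPos ω t ∈ (Set.univ : Set (Torus d N))} = Set.Ici 0 := by
    ext t
    simp
  rw [hitT, hIci, csInf_Ici, Pi.zero_apply]

lemma sum_range_le_hitT {V : Set (Torus d N)} {w : ℕ → Torus d N} {g : ℕ → ℝ}
    (hg : ∀ k, 0 < g k) {m : ℕ} (hm : w m ∈ V) (hmin : ∀ j < m, w j ∉ V) :
    ∑ k ∈ Finset.range m, g k ≤ hitT V (w, g) := by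
  refine le_csInf ⟨∑ k ∈ Finset.range m, g k, Finset.sum_nonneg fun k _ => (hg k).le, ?_⟩ ?_
  · rwa [ctPos, nJumps_sum_range hg]
  · rintro t ⟨ht0, ht⟩
    refine sum_range_le_of_le_nJumps (fun k => (hg k).le) ht0 ?_
    by_contra! hlt
    exact hmin _ hlt ht

lemma sum_indicator_avoidEvent_mul_le_hitT {V : Set (Torus d N)} {w : ℕ → Torus d N} {g : ℕ → ℝ}
    (hg : ∀ k, 0 < g k) (hw : ∃ m, w m ∈ V) (n : ℕ) :
    ∑ k ∈ Finset.range n, (avoidEvent V 0 k).indicator 1 w * ENNReal.ofReal (g k) ≤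
      ENNReal.ofReal (hitT V (w, g)) := by
  have havoid (k : ℕ) : w ∈ avoidEvent V 0 k ↔ k < Nat.find hw := by
    simp [avoidEvent, Nat.lt_find_iff]
  simp only [Set.indicator_apply, havoid, Pi.one_apply, ite_mul, one_mul, zero_mul]
  rw [← Finset.sum_filter]
  calc _ ≤ ∑ k ∈ Finset.range (Nat.find hw), ENNReal.ofReal (g k) :=
        Finset.sum_le_sum_of_subset fun k hk => Finset.mem_range.mpr (Finset.mem_filter.mp hk).2
    _ = ENNReal.ofReal (∑ k ∈ Finset.range (Nat.find hw), g k) :=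
        (ENNReal.ofReal_sum_of_nonneg fun k _ => (hg k).le).symm
    _ ≤ _ := ENNReal.ofReal_le_ofReal
        (sum_range_le_hitT hg (Nat.find_spec hw) fun j => Nat.find_min hw)

instance (n : ℕ) : MeasurableSingletonClass (ZMod n) := ⟨fun _ => trivial⟩

variable [NeZero N] {μ : Measure (ℕ → Torus d N)} {ν : Measure (ℕ → ℝ)} {V : Set (Torus d N)}

lemma IsWalkLaw.isRegularOfDegree (hμ : IsWalkLaw μ (unifInit d N)) :
    (gridGraph d (ZMod N)).IsRegularOfDegree (2 * d) := fun _ =>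
  hμ.degree_eq (by simp [unifInit]) (by simp [unifInit, NeZero.ne])

lemma IsWalkLaw.ae_exists_mem {init : Torus d N → ℝ≥0∞} (hμ : IsWalkLaw μ init)
    (hreg : (gridGraph d (ZMod N)).IsRegularOfDegree (2 * d)) (hV : V.Nonempty) :
    ∀ᵐ w ∂μ, ∃ m, w m ∈ V := by
  have := hμ.1
  have hinit (x : Torus d N) : init x ≠ ∞ :=
    hμ.measure_pathCylinder_zero x ▸ measure_ne_top μ _
  have hsurv := tendsto_pi_nhds.mp
    (neverHitProb_eq_zero preconnected_gridGraph_zmod hV ▸ tendsto_survivalProb _ V)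
  have hlim : Tendsto (fun n => μ (avoidEvent V 0 n)) atTop (nhds 0) := by
    simp only [hμ.measure_avoidEvent_zero hreg, tsum_fintype]
    simpa using tendsto_finsetSum Finset.univ fun x _ =>
      ENNReal.Tendsto.const_mul (ENNReal.tendsto_ofReal (hsurv x)) (Or.inr (hinit x))
  refine le_antisymm (ge_of_tendsto' hlim fun n => measure_mono fun w hw j _ hj => ?_) zero_le
  exact hw ⟨j, by simpa using hj⟩

lemma IsWalkLaw.measure_avoidEvent_zero_unifInit (hμ : IsWalkLaw μ (unifInit d N)) (n : ℕ) :
    μ (avoidEvent V 0 n) =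
      ENNReal.ofReal (((N : ℝ) ^ d)⁻¹ * ∑ x, survivalProb (gridGraph d (ZMod N)) V n x) := by
  have hN : (0 : ℝ) < N ^ d := by have := NeZero.pos N; positivity
  rw [hμ.measure_avoidEvent_zero hμ.isRegularOfDegree, tsum_fintype]
  simp only [unifInit]
  rw [← Finset.mul_sum, ← ENNReal.ofReal_sum_of_nonneg fun x _ => survivalProb_nonneg _ V n x,
    ENNReal.ofReal_mul (by positivity), ENNReal.ofReal_inv_of_pos hN,
    ENNReal.ofReal_pow (Nat.cast_nonneg N), ENNReal.ofReal_natCast]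

/-- Given the path, `hitT` is the sum of as many independent gaps of mean one as there are steps
before the path enters `V`. -/
lemma IsWalkLaw.sum_measure_avoidEvent_le_lintegral_hitT (hμ : IsWalkLaw μ (unifInit d N))
    (hν : IsIIDExp ν) (hV : V.Nonempty) (n : ℕ) :
    ∑ k ∈ Finset.range n, μ (avoidEvent V 0 k) ≤
      ∫⁻ ω, ENNReal.ofReal (hitT V ω) ∂μ.prod ν := by
  have := hμ.1
  have := hν.1
  have hae : ∀ᵐ ω ∂μ.prod ν, (∃ m, ω.1 m ∈ V) ∧ ∀ k, 0 < ω.2 k :=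
    (Measure.quasiMeasurePreserving_fst.ae (hμ.ae_exists_mem hμ.isRegularOfDegree hV)).and
      (Measure.quasiMeasurePreserving_snd.ae hν.ae_pos)
  have hind (k : ℕ) : Measurable ((avoidEvent V 0 k).indicator (1 : (ℕ → Torus d N) → ℝ≥0∞)) :=
    measurable_one.indicator (measurableSet_avoidEvent V 0 k)
  have hgap (k : ℕ) : Measurable fun g : ℕ → ℝ => ENNReal.ofReal (g k) :=
    (measurable_pi_apply k).ennreal_ofReal
  calc ∑ k ∈ Finset.range n, μ (avoidEvent V 0 k)
      ≤ ∑ k ∈ Finset.range n, ∫⁻ ω, (avoidEvent V 0 k).indicator 1 ω.1 *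
          ENNReal.ofReal (ω.2 k) ∂μ.prod ν := by
        refine Finset.sum_le_sum fun k _ => ?_
        rw [lintegral_prod_mul (hind k).aemeasurable (hgap k).aemeasurable,
          lintegral_indicator_one (measurableSet_avoidEvent V 0 k)]
        exact le_mul_of_one_le_right' (hν.one_le_lintegral k)
    _ = ∫⁻ ω, ∑ k ∈ Finset.range n, (avoidEvent V 0 k).indicator 1 ω.1 *
          ENNReal.ofReal (ω.2 k) ∂μ.prod ν :=
        (lintegral_finsetSum _ fun k _ =>
          ((hind k).comp measurable_fst).mul ((hgap k).comp measurable_snd)).symm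
    _ ≤ ∫⁻ ω, ENNReal.ofReal (hitT V ω) ∂μ.prod ν := lintegral_mono_ae <|
        hae.mono fun ω hω => sum_indicator_avoidEvent_mul_le_hitT hω.2 hω.1 n

variable {P : Measure (CTPath d N)}

lemma IsCTWalk.sum_truncatedGreen_le (hP : IsCTWalk P (unifInit d N)) (hV : V.Nonempty)
    (hint : Integrable (hitT V) P) (n : ℕ) :
    ∑ x, truncatedGreen (gridGraph d (ZMod N)) V n x ≤ (N : ℝ) ^ d * ∫ ω, hitT V ω ∂P := by
  obtain ⟨μ, ν, hμ, hν, rfl⟩ := hP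
  have hN : (0 : ℝ) < N ^ d := by have := NeZero.pos N; positivity
  have hnonneg (k : ℕ) : 0 ≤ ∑ x, survivalProb (gridGraph d (ZMod N)) V k x :=
    Finset.sum_nonneg fun x _ => survivalProb_nonneg _ V k x
  have hsum := hμ.sum_measure_avoidEvent_le_lintegral_hitT hν hV n
  simp only [hμ.measure_avoidEvent_zero_unifInit] at hsum
  rw [← ENNReal.ofReal_sum_of_nonneg fun k _ => mul_nonneg (by positivity) (hnonneg k),
    ← ofReal_integral_eq_lintegral_ofReal hint (ae_of_all _ (hitT_nonneg V)),
    ENNReal.ofReal_le_ofReal_iff (integral_nonneg (hitT_nonneg V)), ← Finset.mul_sum,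
    inv_mul_le_iff₀ hN, Finset.sum_comm] at hsum
  simpa only [truncatedGreen, Finset.sum_apply] using hsum

lemma IsCTWalk.one_le_mul_integral_hitT (hP : IsCTWalk P (unifInit d N)) (hV : V.Nonempty)
    (hE : ∫ ω, hitT V ω ∂P ≠ 0) : 1 ≤ (N : ℝ) ^ d * ∫ ω, hitT V ω ∂P := by
  obtain ⟨x, hx⟩ : ∃ x, x ∉ V := by
    by_contra! hall
    simp [Set.eq_univ_of_forall hall, hitT_univ] at hE
  calc 1 = survivalProb (gridGraph d (ZMod N)) V 0 x := (survivalProb_zero_of_notMem hx).symm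
    _ ≤ ∑ x, survivalProb (gridGraph d (ZMod N)) V 0 x :=
        Finset.single_le_sum (fun y _ => survivalProb_nonneg _ V 0 y) (Finset.mem_univ x)
    _ = ∑ x, truncatedGreen (gridGraph d (ZMod N)) V 1 x := by simp [truncatedGreen]
    _ ≤ _ := hP.sum_truncatedGreen_le hV (.of_integral_ne_zero hE) 1

end HittingTime

section Bounds

variable {d N : ℕ} [NeZero N] {P : Measure (CTPath d N)} {V : Set (Torus d N)}

lemma IsCTWalk.isRegularOfDegree (hP : IsCTWalk P (unifInit d N)) :
    (gridGraph d (ZMod N)).IsRegularOfDegree (2 * d) :=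
  let ⟨_, _, hμ, _, _⟩ := hP
  hμ.isRegularOfDegree

lemma IsCTWalk.sq_sum_le_mul_dirichletForm (hP : IsCTWalk P (unifInit d N)) (hd : 0 < d)
    (hV : V.Nonempty) (hint : Integrable (hitT V) P) {h : Torus d N → ℝ}
    (hh : ∀ x ∈ V, h x = 0) :
    2 * d * (∑ x, h x) ^ 2 ≤
      (N : ℝ) ^ d * (∫ ω, hitT V ω ∂P) * dirichletForm (gridGraph d (ZMod N)) h h := by
  have hdpos : (0 : ℝ) < 2 * d := by positivity
  have hgreen (n : ℕ) : ∑ x, ((gridGraph d (ZMod N)).degree x : ℝ) *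
      truncatedGreen (gridGraph d (ZMod N)) V n x ≤
        2 * d * ((N : ℝ) ^ d * ∫ ω, hitT V ω ∂P) := by
    simp only [hP.isRegularOfDegree.degree_eq, ← Finset.mul_sum]
    push_cast
    exact mul_le_mul_of_nonneg_left (hP.sum_truncatedGreen_le hV hint n) hdpos.le
  have hprinciple := sq_sum_degree_mul_le_dirichletForm preconnected_gridGraph_zmod hV hh hgreen
  simp only [hP.isRegularOfDegree.degree_eq, ← Finset.mul_sum] at hprinciple
  push_cast at hprinciple
  refine le_of_mul_le_mul_left ?_ hdpos
  linarith

lemma IsCTWalk.mul_sq_le_mul_capacity (hP : IsCTWalk P (unifInit d N)) (hd : 0 < d)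
    (hV : V.Nonempty) (hint : Integrable (hitT V) P) {c ρ : ℝ} (hc : 0 < c) (hρ : 0 ≤ ρ)
    (hρN : 2 * (ρ + 1) < N)
    (hfar : ∀ x, neverHitProb (gridGraph d ℤ) (torusToLat '' V) x < c → ∀ i, |(x i : ℝ)| ≤ ρ) :
    c * ((N : ℝ) ^ d - (2 * ρ + 1) ^ d) ^ 2 ≤
      (N : ℝ) ^ d * (∫ ω, hitT V ω ∂P) * capacity (torusToLat '' V) := by
  have hbox (x : Torus d N) (hx : truncatedPotential (torusToLat '' V) c x < c) (i : Fin d) :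
      |(torusToLat x i : ℝ)| ≤ ρ :=
    hfar _ ((min_lt_iff.mp hx).resolve_right (lt_irrefl c)) i
  have hform := dirichletForm_truncatedPotential_le hP.isRegularOfDegree V hc.le fun x hx i => by
    have hlt : 2 * ((|torusToLat x i| : ℤ) + 1 : ℝ) < N := by
      rw [Int.cast_abs]
      linarith [hbox x hx i]
    exact_mod_cast hlt
  have hvolume : 0 ≤ c * ((N : ℝ) ^ d - (2 * ρ + 1) ^ d) :=
    mul_nonneg hc.le <| sub_nonneg.mpr <| pow_le_pow_left₀ (by linarith) (by linarith) d
  have hE : 0 ≤ (N : ℝ) ^ d * ∫ ω, hitT V ω ∂P :=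
    mul_nonneg (by positivity) (integral_nonneg (hitT_nonneg V))
  refine le_of_mul_le_mul_left ?_ (by positivity : 0 < 2 * d * c)
  calc 2 * d * c * (c * ((N : ℝ) ^ d - (2 * ρ + 1) ^ d) ^ 2)
      = 2 * d * (c * ((N : ℝ) ^ d - (2 * ρ + 1) ^ d)) ^ 2 := by ring
    _ ≤ 2 * d * (∑ x : Torus d N, truncatedPotential (torusToLat '' V) c x) ^ 2 := by
        gcongr
        exact sum_truncatedPotential_ge hc.le hρ hbox
    _ ≤ _ := hP.sq_sum_le_mul_dirichletForm hd hV hint fun x hx =>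
        truncatedPotential_of_mem hc.le (Set.mem_image_of_mem _ hx)
    _ ≤ _ := mul_le_mul_of_nonneg_left hform hE
    _ = _ := by ring

/-- The constant `C` for which the truncation height and the relative volume left by the box both
differ from `1` by at most `C z` when `V` has radius `N z ^ 4` and the box has radius `N z ^ 2`. -/
def errorConst (d : ℕ) : ℝ := (d + 100 : ℝ) ^ (1 / 4 : ℝ) + 3 ^ d

lemma errorConst_pos (d : ℕ) : 0 < errorConst d := by
  unfold errorConst
  positivity

lemma le_of_errorConst_mul_le_half (hd : 3 ≤ d) {z : ℝ} (hz : 0 < z)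
    (hsmall : errorConst d * z ≤ 1 / 2) : z ≤ 1 / 54 := by
  have hC : (27 : ℝ) ≤ errorConst d :=
    calc (27 : ℝ) = 3 ^ 3 := by norm_num
      _ ≤ 3 ^ d := pow_le_pow_right₀ (by norm_num) hd
      _ ≤ errorConst d := le_add_of_nonneg_left (by positivity)
  nlinarith

lemma abs_le_of_neverHitProb_image_lt (hd : 3 ≤ d) {z : ℝ} (hz : 0 < z) (hNz : 1 ≤ N * z ^ 4)
    (hV : V ⊆ torusBall 0 (N * z ^ 4)) {x : Lat d}
    (hx : neverHitProb (gridGraph d ℤ) (torusToLat '' V) x < 1 - (d + 100 : ℝ) ^ (1 / 4 : ℝ) * z)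
    (i : Fin d) : |(x i : ℝ)| ≤ N * z ^ 2 := by
  have hN : (0 : ℝ) < N := by exact_mod_cast NeZero.pos N
  have hratio : N * z ^ 4 / (N * z ^ 2) = z ^ 2 := by field_simp
  have hpow : ((d + 100 : ℝ) * (N * z ^ 4 / (N * z ^ 2)) ^ 2) ^ (1 / 4 : ℝ) =
      (d + 100 : ℝ) ^ (1 / 4 : ℝ) * z := by
    rw [hratio, Real.mul_rpow (by positivity) (by positivity), ← pow_mul, ← Real.rpow_natCast,
      ← Real.rpow_mul hz.le]
    norm_num
  rw [← hpow] at hx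
  refine abs_le_of_neverHitProb_lt hd hNz (by positivity) ?_ hx i
  rintro _ ⟨y, hy, rfl⟩ i
  exact abs_torusToLat_le (hV hy) i

omit [NeZero N] in
lemma box_volume_le (hd : 0 < d) {z : ℝ} (hz : 0 ≤ z) (hz1 : z ≤ 1) (hNz : 1 ≤ N * z ^ 2) :
    (2 * (N * z ^ 2) + 1) ^ d ≤ (N : ℝ) ^ d * (errorConst d * z) :=
  calc (2 * (N * z ^ 2) + 1) ^ d ≤ (3 * (N * z ^ 2)) ^ d :=
        pow_le_pow_left₀ (by linarith) (by linarith) d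
    _ = (N : ℝ) ^ d * (3 ^ d * z ^ (2 * d)) := by rw [mul_pow, mul_pow, ← pow_mul]; ring
    _ ≤ (N : ℝ) ^ d * (errorConst d * z) := by
        have hC := (errorConst_pos d).le
        have hdrop : z ^ (2 * d) ≤ z := pow_le_of_le_one hz hz1 (by omega)
        have hconst : (3 : ℝ) ^ d ≤ errorConst d := le_add_of_nonneg_left (by positivity)
        gcongr

lemma IsCTWalk.one_sub_cube_mul_le (hP : IsCTWalk P (unifInit d N)) (hd : 3 ≤ d)
    (hV : V.Nonempty) (hint : Integrable (hitT V) P) {z : ℝ} (hz : 0 < z) (hNz : 1 ≤ N * z ^ 4)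
    (hVz : V ⊆ torusBall 0 (N * z ^ 4)) (hsmall : errorConst d * z ≤ 1 / 2) :
    (1 - errorConst d * z) ^ 3 * (N : ℝ) ^ d ≤
      capacity (torusToLat '' V) * ∫ ω, hitT V ω ∂P := by
  have hN : (0 : ℝ) < N := by exact_mod_cast NeZero.pos N
  have hz54 := le_of_errorConst_mul_le_half hd hz hsmall
  have hsq : z ^ 2 ≤ 1 / 8 := by nlinarith
  have hρ : 1 ≤ N * z ^ 2 := hNz.trans <| mul_le_mul_of_nonneg_left
    (pow_le_pow_of_le_one hz.le (by linarith) (by norm_num)) hN.le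
  have hheight : 1 - errorConst d * z ≤ 1 - (d + 100 : ℝ) ^ (1 / 4 : ℝ) * z := by
    gcongr
    exact le_add_of_nonneg_right (by positivity)
  have hvolume : 0 ≤ (N : ℝ) ^ d - (N : ℝ) ^ d * (errorConst d * z) := by
    nlinarith [pow_pos hN d]
  refine le_of_mul_le_mul_left ?_ (pow_pos hN d)
  calc (N : ℝ) ^ d * ((1 - errorConst d * z) ^ 3 * (N : ℝ) ^ d)
      = (1 - errorConst d * z) * ((N : ℝ) ^ d - (N : ℝ) ^ d * (errorConst d * z)) ^ 2 := by ring
    _ ≤ (1 - (d + 100 : ℝ) ^ (1 / 4 : ℝ) * z) *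
          ((N : ℝ) ^ d - (2 * (N * z ^ 2) + 1) ^ d) ^ 2 := by
        gcongr
        · linarith
        · exact box_volume_le (by omega) hz.le (by linarith) hρ
    _ ≤ (N : ℝ) ^ d * (∫ ω, hitT V ω ∂P) * capacity (torusToLat '' V) :=
        hP.mul_sq_le_mul_capacity (by omega) hV hint (by linarith) (by positivity)
          (by nlinarith) fun _ => abs_le_of_neverHitProb_image_lt hd hz hNz hVz
    _ = _ := by ring

lemma one_le_one_add_mul_one_sub_pow_three {q : ℝ} (h0 : 0 ≤ q) (hhalf : q ≤ 1 / 2) :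
    1 ≤ (1 + 14 * q) * (1 - q) ^ 3 := by
  have hremainder : 0 ≤ q * ((1 - 2 * q) * (11 - 17 * q + 7 * q ^ 2)) :=
    mul_nonneg h0 (mul_nonneg (by linarith) (by linarith [sq_nonneg q]))
  linarith [show (1 + 14 * q) * (1 - q) ^ 3 =
    1 + q * ((1 - 2 * q) * (11 - 17 * q + 7 * q ^ 2)) by ring]

lemma IsCTWalk.one_div_integral_hitT_le (hP : IsCTWalk P (unifInit d N)) (hd : 3 ≤ d)
    (hV : V.Nonempty) {z : ℝ} (hz : 0 < z) (hNz : 1 ≤ N * z ^ 4)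
    (hVz : V ⊆ torusBall 0 (N * z ^ 4)) (hsmall : errorConst d * z ≤ 1 / 2) :
    1 / ∫ ω, hitT V ω ∂P ≤
      (1 + 14 * (errorConst d * z)) * capacity (torusToLat '' V) / (N : ℝ) ^ d := by
  have hN : (0 : ℝ) < (N : ℝ) ^ d := by have := NeZero.pos N; positivity
  have hcap := capacity_nonneg (torusToLat '' V)
  have hq : 0 ≤ errorConst d * z := mul_nonneg (errorConst_pos d).le hz.le
  -- The integral vanishes also when `hitT V` is not integrable; then `1 / 0 = 0`.
  rcases (integral_nonneg (hitT_nonneg V) : 0 ≤ ∫ ω, hitT V ω ∂P).eq_or_lt' with hE | hE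
  · rw [hE, div_zero]
    positivity
  rw [div_le_div_iff₀ hE hN, one_mul, mul_assoc]
  calc (N : ℝ) ^ d
      ≤ (1 + 14 * (errorConst d * z)) * (1 - errorConst d * z) ^ 3 * (N : ℝ) ^ d :=
        le_mul_of_one_le_left hN.le (one_le_one_add_mul_one_sub_pow_three hq hsmall)
    _ ≤ _ := by
        rw [mul_assoc]
        exact mul_le_mul_of_nonneg_left (hP.one_sub_cube_mul_le hd hV
          (.of_integral_ne_zero hE.ne') hz hNz hVz hsmall) (by positivity)

end Bounds

lemma exists_one_div_integral_hitT_le_of_le {d : ℕ} (hd : 3 ≤ d) (M : ℕ) :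
    ∃ K : ℝ, 0 ≤ K ∧ ∀ N ≤ M, [NeZero N] → ∀ V : Set (Torus d N), V.Nonempty →
      ∀ P : Measure (CTPath d N), IsCTWalk P (unifInit d N) →
        1 / ∫ ω, hitT V ω ∂P ≤ K * capacity (torusToLat '' V) / (N : ℝ) ^ d := by
  obtain ⟨κ, hκ, hcap⟩ := exists_pos_le_capacity hd
    (Set.finite_Icc (fun _ : Fin d => -(M : ℤ)) fun _ => (M : ℤ))
  refine ⟨M ^ (2 * d) / κ, by positivity, fun N hNM _ V hV P hP => ?_⟩
  have hN : (0 : ℝ) < (N : ℝ) ^ d := by have := NeZero.pos N; positivity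
  have hle : κ ≤ capacity (torusToLat '' V) := by
    refine hcap _ ?_ (hV.image _)
    rintro _ ⟨y, -, rfl⟩
    have hy (i : Fin d) : |torusToLat y i| ≤ M := by
      rw [torusToLat_apply, Int.abs_eq_natAbs]
      exact_mod_cast (ZMod.natAbs_valMinAbs_le (y i)).trans ((Nat.div_le_self N 2).trans hNM)
    exact ⟨fun i => (abs_le.mp (hy i)).1, fun i => (abs_le.mp (hy i)).2⟩
  rcases (integral_nonneg (hitT_nonneg V) : 0 ≤ ∫ ω, hitT V ω ∂P).eq_or_lt' with hE | hE
  · have := capacity_nonneg (torusToLat '' V)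
    rw [hE, div_zero]
    positivity
  calc 1 / ∫ ω, hitT V ω ∂P ≤ (N : ℝ) ^ d :=
        (div_le_iff₀ hE).mpr (hP.one_le_mul_integral_hitT hV hE.ne')
    _ = (N : ℝ) ^ (2 * d) / κ * κ / (N : ℝ) ^ d := by field_simp; ring
    _ ≤ _ := by gcongr

lemma rpow_one_sub_half_eq {x : ℝ} (hx : 0 < x) (ε : ℝ) :
    x ^ (1 - ε / 2) = x * (x ^ (-(ε / 8))) ^ 4 := by
  rw [← Real.rpow_mul_natCast hx.le, sub_eq_add_neg, Real.rpow_add hx, Real.rpow_one]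
  ring_nf

lemma natCast_le_ceil_rpow_inv {C a : ℝ} (ha : 0 < a) {N : ℕ} (hN : 0 < N)
    (h : 1 ≤ C * (N : ℝ) ^ (-a)) : N ≤ ⌈C ^ a⁻¹⌉₊ := by
  have hN' : (0 : ℝ) < N := by exact_mod_cast hN
  have hpow : (N : ℝ) ^ a ≤ C := by
    rwa [Real.rpow_neg hN'.le, ← div_eq_mul_inv, one_le_div (by positivity)] at h
  have hC : 0 ≤ C := (by positivity : 0 ≤ (N : ℝ) ^ a).trans hpow
  exact_mod_cast ((Real.le_rpow_inv_iff_of_pos hN'.le hC ha).mpr hpow).trans (Nat.le_ceil _)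

lemma exists_one_div_integral_hitT_le {d : ℕ} (hd : 3 ≤ d) {a : ℝ} (ha : 0 < a) :
    ∃ c : ℝ, 0 < c ∧ ∀ (N : ℕ) [NeZero N], 1 ≤ N * ((N : ℝ) ^ (-a)) ^ 4 →
      ∀ V : Set (Torus d N), V.Nonempty → V ⊆ torusBall 0 (N * ((N : ℝ) ^ (-a)) ^ 4) →
        ∀ P : Measure (CTPath d N), IsCTWalk P (unifInit d N) →
          1 / ∫ ω, hitT V ω ∂P ≤
            (1 + c * (N : ℝ) ^ (-a)) * capacity (torusToLat '' V) / (N : ℝ) ^ d := by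
  have hC := errorConst_pos d
  obtain ⟨K, hK, hbounded⟩ :=
    exists_one_div_integral_hitT_le_of_le hd ⌈(2 * errorConst d) ^ a⁻¹⌉₊
  refine ⟨14 * errorConst d + 2 * errorConst d * K, by positivity, ?_⟩
  intro N _ hradius V hV hVB P hP
  have hceil := natCast_le_ceil_rpow_inv (C := 2 * errorConst d) ha (NeZero.pos N)
  have hz : 0 < (N : ℝ) ^ (-a) := Real.rpow_pos_of_pos (Nat.cast_pos.mpr (NeZero.pos N)) _
  have hcap := capacity_nonneg (torusToLat '' V)
  set z := (N : ℝ) ^ (-a)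
  have hKz : 0 ≤ errorConst d * K * z := by positivity
  have hCz : 0 < errorConst d * z := by positivity
  rcases le_or_gt (errorConst d * z) (1 / 2) with hsmall | hlarge
  · have hconst : 14 * (errorConst d * z) ≤ (14 * errorConst d + 2 * errorConst d * K) * z := by
      linarith
    exact (hP.one_div_integral_hitT_le hd hV hz hradius hVB hsmall).trans (by gcongr)
  · have hconst : K ≤ 1 + (14 * errorConst d + 2 * errorConst d * K) * z := by nlinarith
    exact (hbounded N (hceil (by linarith)) V hV P hP).trans (by gcongr)

theorem expected_hitting_capacity_bound_general {d : ℕ} (hd : 3 ≤ d) {ε : ℝ} (hε : 0 < ε) :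
    ∃ c c' : ℝ, 0 < c ∧ 0 < c' ∧ ∀ N : ℕ, 0 < N →
      ∀ V : Set (Torus d N), V.Nonempty →
        V ⊆ torusBall (0 : Torus d N) ((N : ℝ) ^ (1 - ε / 2)) →
        ∀ P : Measure (CTPath d N), IsCTWalk P (unifInit d N) →
          ∀ r : ℝ, IsCap d (torusToLat '' V) r →
            1 / (∫ ω, hitT V ω ∂P) ≤ (1 + c * (N : ℝ) ^ (-c')) * r / (N : ℝ) ^ d := by
  obtain ⟨c, hc, hbound⟩ := exists_one_div_integral_hitT_le hd (a := min ε 1 / 8) (by positivity)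
  refine ⟨c, min ε 1 / 8, hc, by positivity, fun N hN V hV hVB P hP r hr => ?_⟩
  have : NeZero N := ⟨hN.ne'⟩
  have hN1 : (1 : ℝ) ≤ N := Nat.one_le_cast.mpr hN
  have hradius : 1 ≤ (N : ℝ) ^ (1 - min ε 1 / 2) :=
    Real.one_le_rpow hN1 (by linarith [min_le_right ε 1])
  have hball : V ⊆ torusBall 0 ((N : ℝ) ^ (1 - min ε 1 / 2)) := fun x hx =>
    le_trans (hVB hx) (Real.rpow_le_rpow_of_exponent_le hN1 (by linarith [min_le_left ε 1]))
  rw [rpow_one_sub_half_eq (by positivity)] at hradius hball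
  rw [hr.eq_capacity]
  exact hbound N hradius V hV hball P hP

/-- **Lemma (lower bound on expected entrance times via capacity).**
For every nonempty `V ⊆ B = B(0, N^{1−ε/2})`,
`1/E[H_V] ≤ (1 + c N^{−c'}) · cap(φ(V)) / N^d`. -/
theorem expected_hitting_capacity_bound
    (d : ℕ) (hd : 3 ≤ d) (ε : ℝ) (hε : 0 < ε ∧ ε < 1) :
    ∃ c c' : ℝ, 0 < c ∧ 0 < c' ∧ ∀ N : ℕ, 2 ≤ N →
      ∀ V : Set (Torus d N), V.Nonempty →
        V ⊆ torusBall (0 : Torus d N) ((N : ℝ) ^ (1 - ε / 2)) →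
        ∀ P : Measure (CTPath d N), IsCTWalk P (unifInit d N) →
          ∀ r : ℝ, IsCap d (torusToLat '' V) r →
            1 / (∫ ω, hitT V ω ∂P) ≤ (1 + c * (N : ℝ) ^ (-c')) * r / (N : ℝ) ^ d := by
  obtain ⟨c, c', hc, hc', hbound⟩ := expected_hitting_capacity_bound_general hd hε.1
  exact ⟨c, c', hc, hc', fun N hN => hbound N (by omega)⟩

end Frag
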